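/- Let 0 < α < |a|. Then there exist continuous real-valued functions A₀, B₀ on the open interval (−|a|, |a|) (depending only on A and φ) and a constant C > 0 such that for every positive integer n and every integer y with |y/n| ≤ α, writing ξₙ = y/n, one has p_n(φ; y) = ((1 + (−1)^{n+y})|b| / (π n (1 − ξₙ²) √(|a|² − ξₙ²))) · (1 + λ_A(φ) ξₙ + A₀(ξₙ) cos(n θ(ξₙ)) + B₀(ξₙ) sin(n θ(ξₙ)) + Eₙ(y)) where |Eₙ(y)| ≤ C/n uniformly over such y. -/

import Mathlib

/-!
Write `c = |a|`, `s = |b|` and `μ(t) = arccos (c cos t)`. The iterates of the walk are expressed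
through the cosine coefficients of the functions `U_n (c cos t)`, with `U_n` the Chebyshev
polynomials of the second kind. Let `T` be the coefficient of `T_n (c cos t) = cos (n μ)` and `M`
that of `(sin (n μ) / sin μ) cos t`. A partial integration turns the coefficients of `U_{n-1}` at
`y ∓ 1` into `M ± ξ T / c` with `ξ = y / n`, hence the transition probability is an explicit
quadratic form in the two numbers `T` and `M` alone. The translation `t ↦ t + π` multiplies both
integrands by `(-1)^(n+y)`, which yields the parity factor and reduces everything to integrals over
`[-π/2, π/2]`, where the phase `n (μ(t) - ξ t)` has the single stationary point `t(ξ)`.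

The claimed relative error `O(1/n)` is one power of `√n` better than plain stationary phase gives,
so the terms of order `1/n` in the integrals have to be followed. Stationary phase is carried out
with error `O(n^(-3/2))` on each side of the stationary point, uniformly while that point stays in a
compact interval. The two sides have opposite `1/n` terms at the stationary point. The endpoint
terms at `±π/2` do not contribute either: for `T` they are purely imaginary because `n + y` is even,
and for `M` the amplitude vanishes there.

With `β = n θ(ξ) / 2 + π / 4`, the main terms of `T` and `M` are, up to the common factor
`√(2 s / (π n (1 - ξ²) √(c² - ξ²)))`, equal to `cos β` and `(√(c² - ξ²) / (c s)) sin β`.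
Inserting them in the quadratic form and using `sin (n θ) = 1 - 2 cos² β` and
`cos (n θ) = 2 sin β cos β` gives the result with `B₀(ξ) = -(ξ² / c² + λ ξ)` and
`A₀(ξ) = √(c² - ξ²) J ξ / (2 c s)`, where `J ξ` is the coefficient of `T M`.
-/

open Filter Topology Asymptotics MeasureTheory

noncomputable section

/-- One step of the (column-decomposition) quantum walk `U` on functions `ℤ → ℂ²`:
`(Uf)(x) = P f(x+1) + Q f(x-1)` with `P = [[a,0],[-conj b,0]]`, `Q = [[0,b],[0,conj a]]`. -/
def qwStep (a b : ℂ) (f : ℤ → ℂ × ℂ) : ℤ → ℂ × ℂ := fun x =>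
  (a * (f (x + 1)).1 + b * (f (x - 1)).2,
   -(starRingEnd ℂ) b * (f (x + 1)).1 + (starRingEnd ℂ) a * (f (x - 1)).2)

/-- `δ₀ ⊗ φ : ℤ → ℂ²`. -/
def qwDelta (φ : ℂ × ℂ) : ℤ → ℂ × ℂ := fun x => if x = 0 then φ else 0

/-- Squared norm of a vector in `ℂ²`. -/
def nsq (u : ℂ × ℂ) : ℝ := ‖u.1‖ ^ 2 + ‖u.2‖ ^ 2

/-- Transition probability `p_n(φ; y) = ‖(Uⁿ(δ₀ ⊗ φ))(y)‖²`. -/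
def qwP (a b : ℂ) (φ : ℂ × ℂ) (n : ℕ) (y : ℤ) : ℝ :=
  nsq (((qwStep a b)^[n] (qwDelta φ)) y)

/-- `λ_A(φ) = |φ₂|² − |φ₁|² + (1/|a|²)(ab conj(φ₁)φ₂ + conj(ab) φ₁ conj(φ₂))` (a real number). -/
def lamA (a b : ℂ) (φ : ℂ × ℂ) : ℝ :=
  ‖φ.2‖ ^ 2 - ‖φ.1‖ ^ 2 +
    (a * b * (starRingEnd ℂ) φ.1 * φ.2 +
      (starRingEnd ℂ) a * (starRingEnd ℂ) b * φ.1 * (starRingEnd ℂ) φ.2).re / ‖a‖ ^ 2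

/-- `μ(t) = arccos(|a| cos t)`. -/
def muF (a : ℂ) (t : ℝ) : ℝ := Real.arccos (‖a‖ * Real.cos t)

/-- `t(η) = arcsin(|b|η/(|a|√(1 − η²)))`. -/
def tF (a b : ℂ) (η : ℝ) : ℝ := Real.arcsin (‖b‖ * η / (‖a‖ * Real.sqrt (1 - η ^ 2)))

/-- `θ(η) = 2μ(t(η)) − 2η t(η)`. -/
def thetaF (a b : ℂ) (η : ℝ) : ℝ := 2 * muF a (tF a b η) - 2 * η * tF a b η

/-! ### Truncated Fresnel integrals -/

lemma norm_integral_le_of_norm_le_div_pow {E : Type*} [NormedAddCommGroup E] [NormedSpace ℝ E]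
    {f : ℝ → E} {D X Y : ℝ} {k : ℕ} (hk : k ≠ 0) (hD : 0 ≤ D) (hX : 0 < X) (hXY : X ≤ Y)
    (hf : ∀ x ∈ Set.Ioc X Y, ‖f x‖ ≤ D / x ^ (k + 1)) :
    ‖∫ x in X..Y, f x‖ ≤ D / (k * X ^ k) := by
  have hpos : ∀ x ∈ Set.uIcc X Y, 0 < x := fun x hx =>
    hX.trans_le (Set.uIcc_of_le hXY ▸ hx).1
  have hprim : ∀ x ∈ Set.uIcc X Y,
      HasDerivAt (fun x : ℝ => -(D / k) * (x ^ k)⁻¹) (D / x ^ (k + 1)) x := fun x hx => by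
    have hx0 := hpos x hx
    refine (((hasDerivAt_pow k x).inv (by positivity)).const_mul (-(D / k))).congr_deriv ?_
    obtain ⟨j, rfl⟩ := Nat.exists_eq_succ_of_ne_zero hk
    simp only [Nat.succ_eq_add_one, Nat.add_sub_cancel]
    field_simp
    ring
  have hint : IntervalIntegrable (fun x => D / x ^ (k + 1)) volume X Y :=
    ContinuousOn.intervalIntegrable <| continuousOn_const.div (by fun_prop)
      fun x hx => (pow_pos (hpos x hx) _).ne'
  calc ‖∫ x in X..Y, f x‖
      ≤ ∫ x in X..Y, D / x ^ (k + 1) :=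
        intervalIntegral.norm_integral_le_of_norm_le hXY (Eventually.of_forall hf) hint
    _ = D / (k * X ^ k) - D / (k * Y ^ k) := by
        rw [intervalIntegral.integral_eq_sub_of_hasDerivAt hprim hint]
        field_simp
        ring
    _ ≤ D / (k * X ^ k) := sub_le_self _ (by have := hX.trans_le hXY; positivity)

lemma norm_cexp_neg_mul_sq_le_one {b : ℂ} (hre : 0 ≤ b.re) (x : ℝ) :
    ‖Complex.exp (-b * (x : ℂ) ^ 2)‖ ≤ 1 := by
  rw [norm_cexp_neg_mul_sq, Real.exp_le_one_iff]
  have := mul_nonneg hre (sq_nonneg x)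
  linarith

/-- Two-term asymptotic antiderivative of `exp (-b x²)` at infinity; the error in its derivative is
of relative size `x⁻⁴`. -/
def gaussTail (b : ℂ) (x : ℝ) : ℂ :=
  Complex.exp (-b * (x : ℂ) ^ 2) / (4 * b ^ 2 * (x : ℂ) ^ 3) -
    Complex.exp (-b * (x : ℂ) ^ 2) / (2 * b * x)

lemma hasDerivAt_gaussTail {b : ℂ} (hb : b ≠ 0) {x : ℝ} (hx : x ≠ 0) :
    HasDerivAt (gaussTail b) (Complex.exp (-b * (x : ℂ) ^ 2)
      - 3 * Complex.exp (-b * (x : ℂ) ^ 2) / (4 * b ^ 2 * (x : ℂ) ^ 4)) x := by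
  have hx' : (x : ℂ) ≠ 0 := by exact_mod_cast hx
  have hid : HasDerivAt (fun x : ℝ => (x : ℂ)) 1 x := Complex.ofRealCLM.hasDerivAt
  have hexp : HasDerivAt (fun x : ℝ => Complex.exp (-b * (x : ℂ) ^ 2))
      (Complex.exp (-b * (x : ℂ) ^ 2) * (-b * (2 * x))) x :=
    ((hid.pow 2).const_mul (-b)).cexp.congr_deriv (by simp)
  have hlin := hexp.div (hid.const_mul (2 * b)) (by simp [hb, hx'])
  have hcub := hexp.div ((hid.pow 3).const_mul (4 * b ^ 2)) (by simp [hb, hx'])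
  refine (hcub.sub hlin).congr_deriv ?_
  simp only [Pi.pow_apply]
  field_simp
  ring

lemma norm_gaussTail_le {b : ℂ} (hre : 0 ≤ b.re) {x : ℝ} (hx : 0 < x) :
    ‖gaussTail b x‖ ≤ 1 / (4 * ‖b‖ ^ 2 * x ^ 3) + 1 / (2 * ‖b‖ * x) := by
  have hexp := norm_cexp_neg_mul_sq_le_one hre x
  refine (norm_sub_le _ _).trans ?_
  simp only [norm_div, norm_mul, norm_pow, Complex.norm_real, Real.norm_of_nonneg hx.le,
    Complex.norm_ofNat]
  gcongr

lemma tendsto_gaussTail {b : ℂ} (hre : 0 ≤ b.re) : Tendsto (gaussTail b) atTop (𝓝 0) := by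
  have hinv := tendsto_inv_atTop_zero (𝕜 := ℝ)
  have hlim : Tendsto (fun x : ℝ => 1 / (4 * ‖b‖ ^ 2 * x ^ 3) + 1 / (2 * ‖b‖ * x))
      atTop (𝓝 0) := by
    have hsum := ((hinv.pow 3).const_mul (4 * ‖b‖ ^ 2)⁻¹).add (hinv.const_mul (2 * ‖b‖)⁻¹)
    rw [zero_pow three_ne_zero, mul_zero, mul_zero, add_zero] at hsum
    exact hsum.congr fun x => by simp only [one_div, mul_inv, inv_pow]
  refine squeeze_zero_norm' ?_ hlim
  filter_upwards [eventually_gt_atTop 0] with x hx using norm_gaussTail_le hre hx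

/-- The remainder of the truncated Gaussian integral `∫₀ˣ exp (-b t²) dt` after removal of
`gaussTail b x`; it tends to half of the full integral as `x → ∞`. -/
def gaussRemainder (b : ℂ) (x : ℝ) : ℂ :=
  (∫ t in (0 : ℝ)..x, Complex.exp (-b * (t : ℂ) ^ 2)) - gaussTail b x

lemma hasDerivAt_gaussRemainder {b : ℂ} (hb : b ≠ 0) {x : ℝ} (hx : x ≠ 0) :
    HasDerivAt (gaussRemainder b)
      (3 * Complex.exp (-b * (x : ℂ) ^ 2) / (4 * b ^ 2 * (x : ℂ) ^ 4)) x := by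
  have hcont : Continuous fun x : ℝ => Complex.exp (-b * (x : ℂ) ^ 2) := by fun_prop
  exact ((hcont.integral_hasStrictDerivAt 0 x).hasDerivAt.sub
    (hasDerivAt_gaussTail hb hx)).congr_deriv (by ring)

lemma norm_gaussRemainder_sub_le {b : ℂ} (hb : b ≠ 0) (hre : 0 ≤ b.re) {X Y : ℝ} (hX : 0 < X)
    (hXY : X ≤ Y) :
    ‖gaussRemainder b Y - gaussRemainder b X‖ ≤ 1 / (4 * ‖b‖ ^ 2 * X ^ 3) := by
  have hpos : ∀ x ∈ Set.uIcc X Y, 0 < x := fun x hx => hX.trans_le (Set.uIcc_of_le hXY ▸ hx).1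
  have hint : IntervalIntegrable
      (fun x : ℝ => 3 * Complex.exp (-b * (x : ℂ) ^ 2) / (4 * b ^ 2 * (x : ℂ) ^ 4)) volume X Y :=
    ContinuousOn.intervalIntegrable <| ContinuousOn.div (by fun_prop) (by fun_prop)
      fun x hx => by simp [hb, (hpos x hx).ne']
  rw [← intervalIntegral.integral_eq_sub_of_hasDerivAt
    (fun x hx => hasDerivAt_gaussRemainder hb (hpos x hx).ne') hint]
  refine (norm_integral_le_of_norm_le_div_pow (k := 3) (D := 3 / (4 * ‖b‖ ^ 2)) three_ne_zero
    (by positivity) hX hXY fun x hx => ?_).trans_eq (by field_simp; norm_num)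
  have hexp := norm_cexp_neg_mul_sq_le_one hre x
  simp only [norm_div, norm_mul, norm_pow, Complex.norm_real, Complex.norm_ofNat,
    Real.norm_of_nonneg (hX.trans hx.1).le, div_div]
  gcongr
  linarith

lemma norm_gaussian_half_sub_gaussRemainder_le_of_re_pos {b : ℂ} (hre : 0 < b.re) {X : ℝ}
    (hX : 0 < X) :
    ‖(Real.pi / b : ℂ) ^ (1 / 2 : ℂ) / 2 - gaussRemainder b X‖ ≤ 1 / (4 * ‖b‖ ^ 2 * X ^ 3) := by
  have hb : b ≠ 0 := by rintro rfl; simp at hre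
  have hlim : Tendsto (gaussRemainder b) atTop (𝓝 ((Real.pi / b : ℂ) ^ (1 / 2 : ℂ) / 2)) := by
    have hint := intervalIntegral_tendsto_integral_Ioi 0
      (integrable_cexp_neg_mul_sq hre).integrableOn tendsto_id
    rw [integral_gaussian_complex_Ioi hre] at hint
    rw [← sub_zero (_ / 2)]
    exact hint.sub (tendsto_gaussTail hre.le)
  refine le_of_tendsto (hlim.sub_const _).norm ?_
  filter_upwards [eventually_ge_atTop X] with Y hY
    using norm_gaussRemainder_sub_le hb hre.le hX hY

lemma continuousAt_gaussRemainder {b : ℂ} (hb : b ≠ 0) {X : ℝ} (hX : X ≠ 0) :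
    ContinuousAt (fun b => gaussRemainder b X) b := by
  have hX' : (X : ℂ) ≠ 0 := by exact_mod_cast hX
  have hint : Continuous fun b : ℂ => ∫ x in (0 : ℝ)..X, Complex.exp (-b * (x : ℂ) ^ 2) :=
    intervalIntegral.continuous_parametric_intervalIntegral_of_continuous' (by fun_prop) _ _
  refine hint.continuousAt.sub (ContinuousAt.sub ?_ ?_) <;>
    exact ContinuousAt.div (by fun_prop) (by fun_prop) (by simp [hb, hX'])

lemma norm_gaussian_half_sub_gaussRemainder_le {b : ℂ} (hb : b ≠ 0) (hre : 0 ≤ b.re) {X : ℝ}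
    (hX : 0 < X) :
    ‖(Real.pi / b : ℂ) ^ (1 / 2 : ℂ) / 2 - gaussRemainder b X‖ ≤ 1 / (4 * ‖b‖ ^ 2 * X ^ 3) := by
  have hslit : (Real.pi / b : ℂ) ∈ Complex.slitPlane := by
    have hsq : 0 < Complex.normSq b := Complex.normSq_pos.2 hb
    rcases hre.lt_or_eq with h | h
    · refine Or.inl ?_
      rw [Complex.div_re, Complex.ofReal_re, Complex.ofReal_im, zero_mul, zero_div, add_zero]
      exact div_pos (mul_pos Real.pi_pos h) hsq
    · have him : b.im ≠ 0 := fun him => hb (Complex.ext h.symm him)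
      exact Or.inr (by simp [Complex.div_im, him, hb, Real.pi_ne_zero])
  have hdamp : Tendsto (fun ε : ℝ => b + ε) (𝓝[>] 0) (𝓝 b) :=
    ((by fun_prop : Continuous fun ε : ℝ => b + ε).tendsto' 0 b (by simp)).mono_left
      nhdsWithin_le_nhds
  have hgauss : ContinuousAt (fun b : ℂ => (Real.pi / b : ℂ) ^ (1 / 2 : ℂ) / 2) b :=
    ((continuousAt_const.div continuousAt_id hb).cpow continuousAt_const hslit).div_const 2
  have hbound : ContinuousAt (fun b : ℂ => 1 / (4 * ‖b‖ ^ 2 * X ^ 3)) b :=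
    continuousAt_const.div (by fun_prop) (by positivity)
  refine le_of_tendsto_of_tendsto
    ((hgauss.sub (continuousAt_gaussRemainder hb hX.ne')).norm.tendsto.comp hdamp)
    (hbound.tendsto.comp hdamp) ?_
  filter_upwards [self_mem_nhdsWithin] with ε hε
  exact norm_gaussian_half_sub_gaussRemainder_le_of_re_pos
    (by simpa using add_pos_of_nonneg_of_pos hre hε) hX

/-- The oscillating factor `exp (i n F)` with frequency `n` and phase function `F`. -/
def osc (n : ℝ) (F : ℝ → ℝ) (x : ℝ) : ℂ := Complex.exp ((n * F x : ℝ) * Complex.I)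

lemma norm_osc (n : ℝ) (F : ℝ → ℝ) (x : ℝ) : ‖osc n F x‖ = 1 := Complex.norm_exp_ofReal_mul_I _

lemma cpow_half_ofReal_mul_I {r : ℝ} (hr : 0 < r) :
    (r * Complex.I : ℂ) ^ (1 / 2 : ℂ) = √r * Complex.exp ((Real.pi / 4 : ℝ) * Complex.I) := by
  have hr' : (r : ℂ) ≠ 0 := by exact_mod_cast hr.ne'
  rw [Complex.cpow_def_of_ne_zero (mul_ne_zero hr' Complex.I_ne_zero),
    Complex.log_ofReal_mul hr Complex.I_ne_zero, Complex.log_I, Real.sqrt_eq_rpow,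
    Real.rpow_def_of_pos hr, Complex.ofReal_exp, ← Complex.exp_add]
  congr 1
  push_cast
  ring

lemma norm_fresnel_sub_le {n X : ℝ} (hn : 0 < n) (hX : 0 < X) :
    ‖(∫ x in (0 : ℝ)..X, osc n (fun x => x ^ 2 / 2) x) -
      (√(2 * Real.pi / n) / 2 * Complex.exp ((Real.pi / 4 : ℝ) * Complex.I)
        + osc n (fun x => x ^ 2 / 2) X / (Complex.I * n * X))‖ ≤ 2 / (n ^ 2 * X ^ 3) := by
  set b : ℂ := -((n / 2 : ℝ) * Complex.I) with hbdef
  have hn' : (n : ℂ) ≠ 0 := by exact_mod_cast hn.ne'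
  have hnb : ‖b‖ = n / 2 := by simp [hbdef, abs_of_pos hn]
  have hb : b ≠ 0 := by rw [← norm_ne_zero_iff, hnb]; positivity
  have hosc : ∀ x : ℝ, Complex.exp (-b * (x : ℂ) ^ 2) = osc n (fun x => x ^ 2 / 2) x := fun x => by
    rw [osc, hbdef]; congr 1; push_cast; ring
  have hpib : (Real.pi / b : ℂ) = (2 * Real.pi / n : ℝ) * Complex.I := by
    rw [div_eq_iff hb, hbdef]
    push_cast
    field_simp
    rw [Complex.I_sq]; ring
  have key := norm_gaussian_half_sub_gaussRemainder_le hb (by simp [hbdef]) hX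
  rw [hpib, cpow_half_ofReal_mul_I (by positivity)] at key
  simp only [gaussRemainder, gaussTail, hosc, hnb] at key
  set e := osc n (fun x => x ^ 2 / 2) X
  set J := ∫ x in (0 : ℝ)..X, osc n (fun x => x ^ 2 / 2) x
  set S : ℂ := √(2 * Real.pi / n) * Complex.exp ((Real.pi / 4 : ℝ) * Complex.I)
  have hcub : ‖e / (4 * b ^ 2 * (X : ℂ) ^ 3)‖ = 1 / (4 * (n / 2) ^ 2 * X ^ 3) := by
    simp [e, norm_osc, hnb, abs_of_pos hX]
  have hlin : e / (Complex.I * n * X) = -(e / (2 * b * X)) := by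
    rw [hbdef, ← div_neg]; congr 1; push_cast; ring
  calc _ = ‖e / (4 * b ^ 2 * (X : ℂ) ^ 3) -
        (S / 2 - (J - (e / (4 * b ^ 2 * (X : ℂ) ^ 3) - e / (2 * b * X))))‖ := by
        rw [hlin]; congr 1; ring
    _ ≤ 1 / (4 * (n / 2) ^ 2 * X ^ 3) + 1 / (4 * (n / 2) ^ 2 * X ^ 3) :=
        (norm_sub_le _ _).trans (add_le_add hcub.le key)
    _ = 2 / (n ^ 2 * X ^ 3) := by field_simp; norm_num

/-! ### One-sided stationary phase -/

lemma hasDerivAt_osc {F : ℝ → ℝ} {F' x : ℝ} (n : ℝ) (hF : HasDerivAt F F' x) :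
    HasDerivAt (osc n F) (osc n F x * (Complex.I * n * F')) x := by
  refine ((hF.const_mul n).ofReal_comp.mul_const Complex.I).cexp.congr_deriv ?_
  rw [osc]
  push_cast
  ring

lemma continuousOn_osc {F : ℝ → ℝ} {s : Set ℝ} (n : ℝ) (hF : ContinuousOn F s) :
    ContinuousOn (osc n F) s := by
  unfold osc
  fun_prop

lemma integral_osc_mul_deriv_mul {n x y : ℝ} (hn : n ≠ 0) {F F' : ℝ → ℝ} {K K' : ℝ → ℂ}
    (hF : ∀ t ∈ Set.uIcc x y, HasDerivAt F (F' t) t) (hF' : ContinuousOn F' (Set.uIcc x y))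
    (hK : ∀ t ∈ Set.uIcc x y, HasDerivAt K (K' t) t) (hK' : ContinuousOn K' (Set.uIcc x y)) :
    ∫ t in x..y, osc n F t * (F' t * K t) =
      (osc n F y * K y - osc n F x * K x - ∫ t in x..y, osc n F t * K' t) / (Complex.I * n) := by
  have hn' : (Complex.I * n : ℂ) ≠ 0 := mul_ne_zero Complex.I_ne_zero (by exact_mod_cast hn)
  have hosc : ContinuousOn (osc n F) (Set.uIcc x y) :=
    continuousOn_osc n (HasDerivAt.continuousOn hF)
  rw [eq_div_iff hn', ← intervalIntegral.integral_mul_const]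
  simp_rw [mul_comm (osc n F _) (K' _), mul_comm (osc n F _) (K _)]
  rw [← intervalIntegral.integral_mul_deriv_eq_deriv_mul hK (fun t ht => hasDerivAt_osc n (hF t ht))
    hK'.intervalIntegrable (ContinuousOn.intervalIntegrable (by fun_prop))]
  exact intervalIntegral.integral_congr fun t _ => by ring

/-- A phase function `F` on `s` with a nondegenerate stationary point at `0`: its derivative `F'` is
bounded below by `m x`, and its second derivative `F''` is bounded by `D`. -/
structure IsStationaryPhase (F F' F'' : ℝ → ℝ) (m D : ℝ) (s : Set ℝ) : Prop where
  pos : 0 < m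
  hasDerivAt : ∀ x ∈ s, HasDerivAt F (F' x) x
  hasDerivAt_deriv : ∀ x ∈ s, HasDerivAt F' (F'' x) x
  continuousOn_deriv₂ : ContinuousOn F'' s
  le_deriv : ∀ x ∈ s, m * x ≤ F' x
  abs_deriv₂_le : ∀ x ∈ s, |F'' x| ≤ D

/-- A continuously differentiable amplitude `K` on `s`, bounded by `B` and with derivative bounded
by `B'`. -/
structure IsBoundedAmplitude (K K' : ℝ → ℂ) (B B' : ℝ) (s : Set ℝ) : Prop where
  hasDerivAt : ∀ x ∈ s, HasDerivAt K (K' x) x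
  continuousOn_deriv : ContinuousOn K' s
  norm_le : ∀ x ∈ s, ‖K x‖ ≤ B
  norm_deriv_le : ∀ x ∈ s, ‖K' x‖ ≤ B'

section VanDerCorput

variable {n m B B' D : ℝ} {F F' F'' : ℝ → ℝ} {K K' : ℝ → ℂ}

lemma IsStationaryPhase.mono {s t : Set ℝ} (hF : IsStationaryPhase F F' F'' m D t) (hst : s ⊆ t) :
    IsStationaryPhase F F' F'' m D s :=
  ⟨hF.pos, fun x hx => hF.hasDerivAt x (hst hx), fun x hx => hF.hasDerivAt_deriv x (hst hx),
    hF.continuousOn_deriv₂.mono hst, fun x hx => hF.le_deriv x (hst hx),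
    fun x hx => hF.abs_deriv₂_le x (hst hx)⟩

lemma IsBoundedAmplitude.mono {s t : Set ℝ} (hK : IsBoundedAmplitude K K' B B' t) (hst : s ⊆ t) :
    IsBoundedAmplitude K K' B B' s :=
  ⟨fun x hx => hK.hasDerivAt x (hst hx), hK.continuousOn_deriv.mono hst,
    fun x hx => hK.norm_le x (hst hx), fun x hx => hK.norm_deriv_le x (hst hx)⟩

lemma IsStationaryPhase.deriv_pos {s : Set ℝ} (hF : IsStationaryPhase F F' F'' m D s) {x : ℝ}
    (hx : x ∈ s) (hx0 : 0 < x) : 0 < F' x :=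
  (mul_pos hF.pos hx0).trans_le (hF.le_deriv x hx)

/-- Derivative of the quotient `K / F'`, which is the amplitude left by a partial integration
against a phase with derivative `F'`. -/
def quotDeriv (F' F'' : ℝ → ℝ) (K K' : ℝ → ℂ) (x : ℝ) : ℂ :=
  (K' x * F' x - K x * F'' x) / (F' x : ℂ) ^ 2

lemma norm_quotDeriv_le {R x : ℝ} {s : Set ℝ} (hF : IsStationaryPhase F F' F'' m D s)
    (hK : IsBoundedAmplitude K K' B B' s) (hx : x ∈ s) (hx0 : 0 < x) (hxR : x ≤ R) :
    ‖quotDeriv F' F'' K K' x‖ ≤ (B' * R / m + B * D / m ^ 2) / x ^ 2 := by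
  have hm := hF.pos
  have hF0 := hF.deriv_pos hx hx0
  have hFm := hF.le_deriv x hx
  have hFD := hF.abs_deriv₂_le x hx
  have hKB := hK.norm_le x hx
  have hKB' := hK.norm_deriv_le x hx
  have hB : 0 ≤ B := (norm_nonneg _).trans hKB
  have hB' : 0 ≤ B' := (norm_nonneg _).trans hKB'
  have hD : 0 ≤ D := (abs_nonneg _).trans hFD
  have hF0' : (F' x : ℂ) ≠ 0 := by exact_mod_cast hF0.ne'
  calc ‖quotDeriv F' F'' K K' x‖ = ‖K' x / F' x - K x * F'' x / (F' x : ℂ) ^ 2‖ := by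
        rw [quotDeriv]; congr 1; field_simp
    _ ≤ ‖K' x‖ / F' x + ‖K x‖ * |F'' x| / F' x ^ 2 := by
        refine (norm_sub_le _ _).trans_eq ?_
        simp only [norm_div, norm_mul, norm_pow, Complex.norm_real, Real.norm_eq_abs,
          abs_of_pos hF0]
    _ ≤ B' / (m * x) + B * D / (m * x) ^ 2 := by gcongr
    _ = (B' * x / m + B * D / m ^ 2) / x ^ 2 := by field_simp
    _ ≤ (B' * R / m + B * D / m ^ 2) / x ^ 2 := by gcongr

lemma integral_osc_mul_eq_quot {ε R : ℝ} (hn : n ≠ 0) (hε : 0 < ε) (hεR : ε ≤ R)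
    (hF : IsStationaryPhase F F' F'' m D (Set.Icc ε R))
    (hK : IsBoundedAmplitude K K' B B' (Set.Icc ε R)) :
    ∫ x in ε..R, osc n F x * K x =
      (osc n F R * (K R / F' R) - osc n F ε * (K ε / F' ε)
        - ∫ x in ε..R, osc n F x * quotDeriv F' F'' K K' x) / (Complex.I * n) := by
  rw [← Set.uIcc_of_le hεR] at hF hK
  have hne : ∀ x ∈ Set.uIcc ε R, (F' x : ℂ) ≠ 0 := fun x hx => by
    exact_mod_cast (hF.deriv_pos hx (hε.trans_le (Set.uIcc_of_le hεR ▸ hx).1)).ne'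
  have hF'c := HasDerivAt.continuousOn hF.hasDerivAt_deriv
  have hKc := HasDerivAt.continuousOn hK.hasDerivAt
  have hF''c := hF.continuousOn_deriv₂
  have hK'c := hK.continuousOn_deriv
  rw [← integral_osc_mul_deriv_mul hn hF.hasDerivAt hF'c (K := fun x => K x / F' x)
    (K' := quotDeriv F' F'' K K')
    (fun x hx => (hK.hasDerivAt x hx).div (hF.hasDerivAt_deriv x hx).ofReal_comp (hne x hx))
    (ContinuousOn.div (by fun_prop) (by fun_prop) fun x hx => pow_ne_zero 2 (hne x hx))]
  exact intervalIntegral.integral_congr fun x hx => by simp only [mul_div_cancel₀ _ (hne x hx)]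

lemma norm_integral_osc_mul_le_of_pos {ε R : ℝ} (hn : 0 < n) (hε : 0 < ε) (hεR : ε ≤ R)
    (hF : IsStationaryPhase F F' F'' m D (Set.Icc ε R))
    (hK : IsBoundedAmplitude K K' B B' (Set.Icc ε R)) :
    ‖∫ x in ε..R, osc n F x * K x‖ ≤
      (2 * B / m + (B' * R / m + B * D / m ^ 2)) / (n * ε) := by
  have hm := hF.pos
  have hεmem : ε ∈ Set.Icc ε R := ⟨le_rfl, hεR⟩
  have hB : 0 ≤ B := (norm_nonneg _).trans (hK.norm_le ε hεmem)
  have hB' : 0 ≤ B' := (norm_nonneg _).trans (hK.norm_deriv_le ε hεmem)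
  have hD : 0 ≤ D := (abs_nonneg _).trans (hF.abs_deriv₂_le ε hεmem)
  have hR : 0 < R := hε.trans_le hεR
  have hend : ∀ x ∈ Set.Icc ε R, ‖osc n F x * (K x / F' x)‖ ≤ B / (m * ε) := fun x hx => by
    rw [norm_mul, norm_osc, one_mul, norm_div, Complex.norm_real,
      Real.norm_of_nonneg (hF.deriv_pos hx (hε.trans_le hx.1)).le]
    have hKx := hK.norm_le x hx
    gcongr
    exact (mul_le_mul_of_nonneg_left hx.1 hm.le).trans (hF.le_deriv x hx)
  have hrest : ‖∫ x in ε..R, osc n F x * quotDeriv F' F'' K K' x‖ ≤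
      (B' * R / m + B * D / m ^ 2) / ε := by
    refine (norm_integral_le_of_norm_le_div_pow (k := 1) (D := B' * R / m + B * D / m ^ 2)
      one_ne_zero (by positivity) hε hεR fun x hx => ?_).trans_eq
        (by rw [Nat.cast_one, one_mul, pow_one])
    rw [norm_mul, norm_osc, one_mul]
    exact norm_quotDeriv_le hF hK (Set.Ioc_subset_Icc_self hx) (hε.trans hx.1) hx.2
  rw [integral_osc_mul_eq_quot hn.ne' hε hεR hF hK, norm_div, norm_mul, Complex.norm_I, one_mul,
    Complex.norm_real, Real.norm_of_nonneg hn.le]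
  calc _ ≤ (B / (m * ε) + B / (m * ε) + (B' * R / m + B * D / m ^ 2) / ε) / n := by
        gcongr
        exact (norm_sub_le _ _).trans (add_le_add ((norm_sub_le _ _).trans
          (add_le_add (hend R ⟨hεR, le_rfl⟩) (hend ε hεmem))) hrest)
    _ = _ := by field_simp; ring

-- The piece `[0, 1 / √n]` is estimated trivially, the rest by a partial integration.
lemma norm_integral_osc_mul_le {R : ℝ} (hn : 0 < n) (hR : 0 ≤ R)
    (hF : IsStationaryPhase F F' F'' m D (Set.Icc 0 R))
    (hK : IsBoundedAmplitude K K' B B' (Set.Icc 0 R)) :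
    ‖∫ x in (0 : ℝ)..R, osc n F x * K x‖ ≤
      (B + (2 * B / m + (B' * R / m + B * D / m ^ 2))) / √n := by
  have hm := hF.pos
  have h0mem : (0 : ℝ) ∈ Set.Icc 0 R := ⟨le_rfl, hR⟩
  have hB : 0 ≤ B := (norm_nonneg _).trans (hK.norm_le 0 h0mem)
  have hB' : 0 ≤ B' := (norm_nonneg _).trans (hK.norm_deriv_le 0 h0mem)
  have hD : 0 ≤ D := (abs_nonneg _).trans (hF.abs_deriv₂_le 0 h0mem)
  have htriv : ∀ ε, 0 ≤ ε → ε ≤ R → ‖∫ x in (0 : ℝ)..ε, osc n F x * K x‖ ≤ B * ε := by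
    intro ε hε hεR
    have := intervalIntegral.norm_integral_le_of_norm_le_const (f := fun x => osc n F x * K x)
      (a := 0) (b := ε) (C := B) fun x hx => by
        rw [Set.uIoc_of_le hε] at hx
        rw [norm_mul, norm_osc, one_mul]
        exact hK.norm_le x ⟨hx.1.le, hx.2.trans hεR⟩
    rwa [sub_zero, abs_of_nonneg hε] at this
  rcases le_total R (1 / √n) with hsmall | hlarge
  · calc _ ≤ B * R := htriv R hR le_rfl
      _ ≤ B * (1 / √n) := by gcongr
      _ = B / √n := mul_one_div _ _
      _ ≤ _ := by gcongr; exact le_add_of_nonneg_right (by positivity)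
  have hε : 0 < 1 / √n := by positivity
  have hcont : ContinuousOn (fun x => osc n F x * K x) (Set.uIcc 0 R) := by
    rw [Set.uIcc_of_le hR]
    exact (continuousOn_osc n (HasDerivAt.continuousOn hF.hasDerivAt)).mul
      (HasDerivAt.continuousOn hK.hasDerivAt)
  have hεmem : 1 / √n ∈ Set.uIcc 0 R := Set.mem_uIcc_of_le hε.le hlarge
  rw [← intervalIntegral.integral_add_adjacent_intervals
    (hcont.mono (Set.uIcc_subset_uIcc_left hεmem)).intervalIntegrable
    (hcont.mono (Set.uIcc_subset_uIcc_right hεmem)).intervalIntegrable]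
  have hsub : Set.Icc (1 / √n) R ⊆ Set.Icc 0 R := Set.Icc_subset_Icc_left hε.le
  have hsqrt : n * (1 / √n) = √n := by rw [mul_one_div, Real.div_sqrt]
  refine (norm_add_le _ _).trans ((add_le_add (htriv _ hε.le hlarge)
    (norm_integral_osc_mul_le_of_pos hn hε hlarge (hF.mono hsub) (hK.mono hsub))).trans_eq ?_)
  rw [hsqrt, mul_one_div, ← add_div]

end VanDerCorput

lemma norm_integral_osc_half_sq_sub_le {n R : ℝ} {F w w' : ℝ → ℝ} (hn : 0 < n) (hR : 0 ≤ R)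
    (hF : ∀ x ∈ Set.Icc 0 R, F x = w x ^ 2 / 2) (hw0 : w 0 = 0) (hwR : 0 < w R)
    (hwc : ContinuousOn w (Set.Icc 0 R)) (hw : ∀ x ∈ Set.Ioo 0 R, HasDerivAt w (w' x) x)
    (hw' : ContinuousOn w' (Set.Icc 0 R)) :
    ‖(∫ x in (0 : ℝ)..R, osc n F x * w' x) -
      (√(2 * Real.pi / n) / 2 * Complex.exp ((Real.pi / 4 : ℝ) * Complex.I)
        + osc n F R / (Complex.I * n * w R))‖ ≤ 2 / (n ^ 2 * w R ^ 3) := by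
  have hosc : Continuous (osc n fun x => x ^ 2 / 2) := by
    unfold osc
    fun_prop
  have hsubst : ∫ x in (0 : ℝ)..R, osc n F x * w' x =
      ∫ y in (0 : ℝ)..w R, osc n (fun y => y ^ 2 / 2) y := by
    rw [← Set.uIcc_of_le hR] at hF hwc hw'
    have := intervalIntegral.integral_deriv_smul_comp'' hwc
      (fun x hx => (hw x (by rwa [min_eq_left hR, max_eq_right hR] at hx)).hasDerivWithinAt)
      hw' hosc.continuousOn
    rw [hw0] at this
    rw [← this]
    refine intervalIntegral.integral_congr fun x hx => ?_
    simp only [osc, Function.comp, Complex.real_smul, hF x hx, mul_comm]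
  rw [hsubst, osc, hF R ⟨hR, le_rfl⟩]
  exact norm_fresnel_sub_le hn hwR

-- In the Morse coordinate `w` the phase is exactly `w² / 2`, so the amplitude `w'` gives a
-- truncated Fresnel integral. The amplitude `F' K` is integrated by parts.
lemma norm_integral_osc_morse_sub_le {n R m B B' D G : ℝ} {F F' F'' w w' : ℝ → ℝ}
    {K K' K'' : ℝ → ℂ} (hn : 0 < n) (hR : 0 ≤ R)
    (hF : IsStationaryPhase F F' F'' m D (Set.Icc 0 R)) (hFw : ∀ x ∈ Set.Icc 0 R, F x = w x ^ 2 / 2)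
    (hw0 : w 0 = 0) (hwR : 0 < w R) (hwc : ContinuousOn w (Set.Icc 0 R))
    (hw : ∀ x ∈ Set.Ioo 0 R, HasDerivAt w (w' x) x) (hw' : ContinuousOn w' (Set.Icc 0 R))
    (hK : ∀ x ∈ Set.Icc 0 R, HasDerivAt K (K' x) x)
    (hK' : IsBoundedAmplitude K' K'' B B' (Set.Icc 0 R)) :
    ‖(∫ x in (0 : ℝ)..R, osc n F x * (G * w' x + F' x * K x)) -
      (G * (√(2 * Real.pi / n) / 2 * Complex.exp ((Real.pi / 4 : ℝ) * Complex.I)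
        + osc n F R / (Complex.I * n * w R))
        + (osc n F R * K R - osc n F 0 * K 0) / (Complex.I * n))‖ ≤
      |G| * (2 / (n ^ 2 * w R ^ 3)) +
        (B + (2 * B / m + (B' * R / m + B * D / m ^ 2))) / (n * √n) := by
  have huIcc := Set.uIcc_of_le hR
  have hK'c := HasDerivAt.continuousOn hK'.hasDerivAt
  have hKc := HasDerivAt.continuousOn hK
  have hF'c := HasDerivAt.continuousOn hF.hasDerivAt_deriv
  have hoscc := continuousOn_osc n (HasDerivAt.continuousOn hF.hasDerivAt)
  have hfresnel := norm_integral_osc_half_sq_sub_le hn hR hFw hw0 hwR hwc hw hw'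
  have hparts := integral_osc_mul_deriv_mul hn.ne' (huIcc ▸ hF.hasDerivAt) (huIcc ▸ hF'c)
    (huIcc ▸ hK) (huIcc ▸ hK'c)
  have hvdc := norm_integral_osc_mul_le hn hR hF hK'
  set V := ∫ x in (0 : ℝ)..R, osc n F x * K' x
  have hsplit : ∫ x in (0 : ℝ)..R, osc n F x * (G * w' x + F' x * K x) =
      G * (∫ x in (0 : ℝ)..R, osc n F x * w' x) + ∫ x in (0 : ℝ)..R, osc n F x * (F' x * K x) := by
    rw [← intervalIntegral.integral_const_mul, ← intervalIntegral.integral_add]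
    · exact intervalIntegral.integral_congr fun x _ => by ring
    all_goals
      apply ContinuousOn.intervalIntegrable
      rw [huIcc]
      fun_prop
  have hV : ‖V / (Complex.I * n)‖ ≤
      (B + (2 * B / m + (B' * R / m + B * D / m ^ 2))) / (n * √n) := by
    rw [norm_div, norm_mul, Complex.norm_I, one_mul, Complex.norm_real, Real.norm_of_nonneg hn.le,
      mul_comm n, ← div_div]
    gcongr
  rw [hsplit, hparts]
  set J := ∫ x in (0 : ℝ)..R, osc n F x * w' x
  set A : ℂ := √(2 * Real.pi / n) / 2 * Complex.exp ((Real.pi / 4 : ℝ) * Complex.I)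
    + osc n F R / (Complex.I * n * w R)
  calc _ = ‖G * (J - A) - V / (Complex.I * n)‖ := by congr 1; ring
    _ ≤ |G| * (2 / (n ^ 2 * w R ^ 3)) + _ := by
      refine (norm_sub_le _ _).trans (add_le_add ?_ hV)
      rw [norm_mul, Complex.norm_real, Real.norm_eq_abs]
      gcongr

/-! ### Taylor remainders as parametric integrals -/

universe u

lemma contDiff_parametric_intervalIntegral {E F : Type u} [NormedAddCommGroup E] [NormedSpace ℝ E]
    [FiniteDimensional ℝ E] [NormedAddCommGroup F] [NormedSpace ℝ F] {k : ℕ} {f : E → ℝ → F}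
    (hf : ContDiff ℝ k (Function.uncurry f)) (a b : ℝ) :
    ContDiff ℝ k fun x => ∫ t in a..b, f x t := by
  induction k generalizing F with
  | zero =>
    rw [Nat.cast_zero, contDiff_zero] at hf ⊢
    exact intervalIntegral.continuous_parametric_intervalIntegral_of_continuous' hf a b
  | succ k ih =>
    set f' : E → ℝ → E →L[ℝ] F := fun x t =>
      (fderiv ℝ (Function.uncurry f) (x, t)).comp (ContinuousLinearMap.inl ℝ E ℝ)
    have hf' : ContDiff ℝ k (Function.uncurry f') :=
      (hf.fderiv_right le_rfl).clm_comp contDiff_const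
    have hderiv (x : E) (t : ℝ) : HasFDerivAt (fun x => f x t) (f' x t) x :=
      (hf.differentiable (by simp) (x, t)).hasFDerivAt.comp (f := fun x => (x, t)) x
        (hasFDerivAt_prodMk_left x t)
    push_cast
    refine contDiff_succ_iff_hasFDerivAt.2 ⟨_, ih hf', fun x₀ => ?_⟩
    obtain ⟨C, hC⟩ := IsCompact.exists_bound_of_continuousOn
      ((isCompact_closedBall x₀ 1).prod (isCompact_uIcc (a := a) (b := b)))
      hf'.continuous.continuousOn
    have hcont (x : E) : Continuous (f x) :=
      hf.continuous.comp (by fun_prop : Continuous fun t => (x, t))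
    have hcont' : Continuous (f' x₀) :=
      hf'.continuous.comp (by fun_prop : Continuous fun t => (x₀, t))
    exact intervalIntegral.hasFDerivAt_integral_of_dominated_of_fderiv_le
      (bound := fun _ => C) (Metric.closedBall_mem_nhds x₀ one_pos)
      (.of_forall fun x => (hcont x).aestronglyMeasurable) ((hcont x₀).intervalIntegrable a b)
      hcont'.aestronglyMeasurable
      (.of_forall fun t ht x hx => hC (x, t) ⟨hx, Set.uIoc_subset_uIcc ht⟩)
      intervalIntegrable_const (.of_forall fun t _ x _ => hderiv x t)

/-- The mean `∫₀¹ (1 - u)ᵏ φ(t + u x) du` of `φ` over the segment from `t` to `t + x`; it is `k!`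
times the coefficient of `xᵏ⁺¹` in Taylor's integral remainder of a function with `(k + 1)`-st
derivative `φ`, and depends smoothly on `(t, x)` across `x = 0`. -/
def taylorMean (k : ℕ) (φ : ℝ → ℝ) (t x : ℝ) : ℝ := ∫ u in 0..1, (1 - u) ^ k * φ (t + u * x)

lemma contDiff_taylorMean {r : ℕ} {φ : ℝ → ℝ} (hφ : ContDiff ℝ r φ) (k : ℕ) :
    ContDiff ℝ r fun z : ℝ × ℝ => taylorMean k φ z.1 z.2 :=
  contDiff_parametric_intervalIntegral (f := fun (z : ℝ × ℝ) u => (1 - u) ^ k * φ (z.1 + u * z.2))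
    (by simp only [Function.uncurry_def]; fun_prop) 0 1

lemma taylorMean_succ {φ φ' : ℝ → ℝ} (hφ : ∀ t, HasDerivAt φ (φ' t) t) (hφ' : Continuous φ')
    (k : ℕ) (t x : ℝ) :
    (k + 1) * taylorMean k φ t x = φ t + x * taylorMean (k + 1) φ' t x := by
  have hcont : Continuous φ := continuous_iff_continuousAt.2 fun t => (hφ t).continuousAt
  have hderiv (u : ℝ) : HasDerivAt (fun u => -((1 - u) ^ (k + 1) * φ (t + u * x)))
      ((k + 1) * ((1 - u) ^ k * φ (t + u * x)) - x * ((1 - u) ^ (k + 1) * φ' (t + u * x))) u := by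
    refine ((((hasDerivAt_id' u).const_sub 1).pow (k + 1)).mul ((hφ _).comp u
      (((hasDerivAt_id' u).mul_const x).const_add t))).neg.congr_deriv ?_
    simp only [Nat.add_sub_cancel, Pi.pow_apply, Function.comp]
    push_cast
    ring
  have hint {ψ : ℝ → ℝ} (hψ : Continuous ψ) (c : ℝ) (j : ℕ) :
      IntervalIntegrable (fun u => c * ((1 - u) ^ j * ψ (t + u * x))) volume 0 1 :=
    (by fun_prop : Continuous fun u => c * ((1 - u) ^ j * ψ (t + u * x))).intervalIntegrable 0 1
  have hparts := intervalIntegral.integral_eq_sub_of_hasDerivAt (fun u _ => hderiv u)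
    ((hint hcont (k + 1) k).sub (hint hφ' x (k + 1)))
  rw [intervalIntegral.integral_sub (hint hcont _ _) (hint hφ' _ _),
    intervalIntegral.integral_const_mul, intervalIntegral.integral_const_mul] at hparts
  simp only [sub_self, ne_eq, Nat.add_eq_zero_iff, one_ne_zero, and_false, not_false_eq_true,
    zero_pow, zero_mul, neg_zero, sub_zero, one_pow, add_zero, one_mul, zero_sub, neg_neg] at hparts
  simp only [taylorMean]
  linear_combination hparts

lemma add_eq_add_mul_taylorMean {φ φ' : ℝ → ℝ} (hφ : ∀ t, HasDerivAt φ (φ' t) t)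
    (hφ' : Continuous φ') (t x : ℝ) : φ (t + x) = φ t + x * taylorMean 0 φ' t x := by
  have hderiv (u : ℝ) : HasDerivAt (fun u => φ (t + u * x)) (x * φ' (t + u * x)) u :=
    ((hφ _).comp u (((hasDerivAt_id' u).mul_const x).const_add t)).congr_deriv (by ring)
  have hcont : Continuous fun u => x * φ' (t + u * x) := by fun_prop
  have hftc := intervalIntegral.integral_eq_sub_of_hasDerivAt (fun u _ => hderiv u)
    (hcont.intervalIntegrable 0 1)
  simp only [intervalIntegral.integral_const_mul, one_mul, zero_mul, add_zero] at hftc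
  simp only [taylorMean, pow_zero, one_mul, hftc]
  ring

lemma taylorMean_comp_neg (k : ℕ) (φ : ℝ → ℝ) (t x : ℝ) :
    taylorMean k (fun s => φ (-s)) (-t) x = taylorMean k φ t (-x) := by
  simp only [taylorMean, neg_add, neg_neg, mul_neg]

lemma taylorMean_neg (k : ℕ) (φ : ℝ → ℝ) (t x : ℝ) :
    taylorMean k (fun s => -φ s) t x = -taylorMean k φ t x := by
  simp only [taylorMean, mul_neg, intervalIntegral.integral_neg]

lemma div_le_taylorMean {φ : ℝ → ℝ} {m t x : ℝ} (hφ : Continuous φ)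
    (hlow : ∀ u ∈ Set.Icc (0 : ℝ) 1, m * (1 - u) ≤ φ (t + u * x)) (k : ℕ) :
    m / (k + 2) ≤ taylorMean k φ t x := by
  have hmean : ∫ u in (0 : ℝ)..1, m * (1 - u) ^ (k + 1) = m / (k + 2) := by
    rw [intervalIntegral.integral_const_mul, intervalIntegral.integral_comp_sub_left
      (fun u : ℝ => u ^ (k + 1)), integral_pow]
    push_cast
    norm_num
    ring
  rw [← hmean, taylorMean]
  refine intervalIntegral.integral_mono_on zero_le_one
    ((by fun_prop : Continuous fun u : ℝ => m * (1 - u) ^ (k + 1)).intervalIntegrable _ _)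
    ((by fun_prop : Continuous fun u => (1 - u) ^ k * φ (t + u * x)).intervalIntegrable _ _)
    fun u hu => ?_
  calc m * (1 - u) ^ (k + 1) = (1 - u) ^ k * (m * (1 - u)) := by ring
    _ ≤ _ := mul_le_mul_of_nonneg_left (hlow u hu) (pow_nonneg (sub_nonneg.2 hu.2) k)

/-! ### Uniform stationary phase -/

/-- The smooth amplitude `k` in `g(t + x) = G w'(x) + (v(t + x) - v(t)) k(t, x)`. Here `v' = φ`, the
Morse coordinate is `w(x) = x √(2 p)` with `p = taylorMean 1 φ t x`, its derivative is `q / √(2 p)`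
with `q = taylorMean 0 φ t x`, and `G = g(t) / √φ(t)`. -/
def morseAmplitude (φ g : ℝ → ℝ) (t x : ℝ) : ℝ :=
  (taylorMean 0 (deriv g) t x +
    g t * ((φ t * taylorMean 2 (deriv φ) t x - 2 * φ t * taylorMean 1 (deriv φ) t x
        - x * taylorMean 1 (deriv φ) t x ^ 2) /
      (√(φ t) * √(2 * taylorMean 1 φ t x)
        * (√(φ t) * √(2 * taylorMean 1 φ t x) + taylorMean 0 φ t x)))) /
    taylorMean 0 φ t x

/-- The points `(t, x)` at which `morseAmplitude φ` is smooth. -/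
def morseDomain (φ : ℝ → ℝ) : Set (ℝ × ℝ) :=
  {z | 0 < φ z.1 ∧ 0 < taylorMean 0 φ z.1 z.2 ∧ 0 < taylorMean 1 φ z.1 z.2}

lemma isOpen_morseDomain {φ : ℝ → ℝ} (hφ : Continuous φ) : IsOpen (morseDomain φ) := by
  have hmean (k : ℕ) : Continuous fun z : ℝ × ℝ => taylorMean k φ z.1 z.2 :=
    (contDiff_taylorMean (r := 0) (contDiff_zero.2 hφ) k).continuous
  exact (isOpen_lt continuous_const (hφ.comp continuous_fst)).inter
    ((isOpen_lt continuous_const (hmean 0)).inter (isOpen_lt continuous_const (hmean 1)))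

lemma contDiffOn_morseAmplitude {r : ℕ} {φ g : ℝ → ℝ} (hφ : ContDiff ℝ (r + 1) φ)
    (hg : ContDiff ℝ (r + 1) g) :
    ContDiffOn ℝ r (fun z : ℝ × ℝ => morseAmplitude φ g z.1 z.2) (morseDomain φ) := by
  have hφ₀ : ContDiff ℝ r φ := hφ.of_succ
  have hg₀ : ContDiff ℝ r g := hg.of_succ
  have hmean (k : ℕ) := contDiff_taylorMean hφ₀ k
  have hmean' (k : ℕ) := contDiff_taylorMean (contDiff_succ_iff_deriv.1 hφ).2.2 k
  have hgmean := contDiff_taylorMean (contDiff_succ_iff_deriv.1 hg).2.2 0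
  have hroot : ContDiffOn ℝ r (fun z : ℝ × ℝ => √(φ z.1) * √(2 * taylorMean 1 φ z.1 z.2))
      (morseDomain φ) :=
    ((hφ₀.comp contDiff_fst).contDiffOn.sqrt fun z hz => hz.1.ne').mul
      ((contDiff_const.mul (hmean 1)).contDiffOn.sqrt fun z hz => (mul_pos two_pos hz.2.2).ne')
  have hroot_pos (z : ℝ × ℝ) (hz : z ∈ morseDomain φ) :
      0 < √(φ z.1) * √(2 * taylorMean 1 φ z.1 z.2) :=
    mul_pos (Real.sqrt_pos.2 hz.1) (Real.sqrt_pos.2 (mul_pos two_pos hz.2.2))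
  have hnum : ContDiff ℝ r fun z : ℝ × ℝ => φ z.1 * taylorMean 2 (deriv φ) z.1 z.2
      - 2 * φ z.1 * taylorMean 1 (deriv φ) z.1 z.2
      - z.2 * taylorMean 1 (deriv φ) z.1 z.2 ^ 2 :=
    (((hφ₀.comp contDiff_fst).mul (hmean' 2)).sub
      ((contDiff_const.mul (hφ₀.comp contDiff_fst)).mul (hmean' 1))).sub
      (contDiff_snd.mul ((hmean' 1).pow 2))
  refine (hgmean.contDiffOn.add ((hg₀.comp contDiff_fst).contDiffOn.mul (hnum.contDiffOn.div
    (hroot.mul (hroot.add (hmean 0).contDiffOn)) fun z hz => ?_))).div (hmean 0).contDiffOn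
    fun z hz => hz.2.1.ne'
  exact (mul_pos (hroot_pos z hz) (add_pos (hroot_pos z hz) hz.2.1)).ne'

lemma eq_add_mul_morseAmplitude {φ g : ℝ → ℝ} (hφ : ContDiff ℝ 1 φ) (hg : ContDiff ℝ 1 g)
    {t x : ℝ} (hz : (t, x) ∈ morseDomain φ) :
    g (t + x) = g t / √(φ t) * (taylorMean 0 φ t x / √(2 * taylorMean 1 φ t x))
      + x * taylorMean 0 φ t x * morseAmplitude φ g t x := by
  obtain ⟨hφt, hq, hp⟩ := hz
  have hφd (s : ℝ) : HasDerivAt φ (deriv φ s) s := (hφ.differentiable one_ne_zero s).hasDerivAt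
  have hgd (s : ℝ) : HasDerivAt g (deriv g s) s := (hg.differentiable one_ne_zero s).hasDerivAt
  have hφc : Continuous (deriv φ) := hφ.continuous_deriv le_rfl
  have hexp₀ := taylorMean_succ hφd hφc 0 t x
  have hexp₁ := taylorMean_succ hφd hφc 1 t x
  have hgt := add_eq_add_mul_taylorMean hgd (hg.continuous_deriv le_rfl) t x
  simp only [CharP.cast_eq_zero, zero_add, one_mul, Nat.cast_one, one_add_one_eq_two] at hexp₀ hexp₁
  simp only [morseAmplitude]
  set p := taylorMean 1 φ t x
  set q := taylorMean 0 φ t x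
  set ρ := √(φ t) * √(2 * p) with hρ_def
  have hρ : 0 < ρ := mul_pos (Real.sqrt_pos.2 hφt) (Real.sqrt_pos.2 (by positivity))
  have hρ_sq : ρ ^ 2 = φ t * (2 * p) := by
    rw [hρ_def, mul_pow, Real.sq_sqrt hφt.le, Real.sq_sqrt (by positivity)]
  have hcancel : x * (φ t * taylorMean 2 (deriv φ) t x - 2 * φ t * taylorMean 1 (deriv φ) t x
      - x * taylorMean 1 (deriv φ) t x ^ 2) = (ρ - q) * (ρ + q) := by
    linear_combination (-φ t) * hexp₁ + (q + φ t + x * taylorMean 1 (deriv φ) t x) * hexp₀ - hρ_sq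
  have hw' : g t / √(φ t) * (q / √(2 * p)) = g t * (q / ρ) := by
    rw [hρ_def]; ring
  rw [hw', hgt]
  field_simp
  linear_combination (-g t) * hcancel

lemma morseAmplitude_comp_neg (φ g : ℝ → ℝ) (t x : ℝ) :
    morseAmplitude (fun s => φ (-s)) (fun s => g (-s)) (-t) x = -morseAmplitude φ g t (-x) := by
  have hderiv (ψ : ℝ → ℝ) : deriv (fun s => ψ (-s)) = fun s => -deriv ψ (-s) :=
    funext fun s => deriv_comp_neg ψ s
  have hmean (k : ℕ) (ψ : ℝ → ℝ) :
      taylorMean k (fun s => -deriv ψ (-s)) (-t) x = -taylorMean k (deriv ψ) t (-x) := by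
    rw [taylorMean_neg, taylorMean_comp_neg]
  simp only [morseAmplitude, hderiv, hmean, taylorMean_comp_neg, neg_neg]
  ring

lemma exists_contDiffOn_hasDerivAt_snd {r : ℕ} {f : ℝ × ℝ → ℝ} {s : Set (ℝ × ℝ)} (hs : IsOpen s)
    (hf : ContDiffOn ℝ (r + 1) f s) :
    ∃ f' : ℝ × ℝ → ℝ, ContDiffOn ℝ r f' s ∧
      ∀ t x, (t, x) ∈ s → HasDerivAt (fun x => f (t, x)) (f' (t, x)) x := by
  refine ⟨fun z => fderiv ℝ f z (0, 1),
    (hf.fderiv_of_isOpen hs le_rfl).clm_apply contDiffOn_const, fun t x hz => ?_⟩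
  have hdiff : HasFDerivAt f (fderiv ℝ f (t, x)) (t, x) :=
    ((hf.differentiableOn (by simp) _ hz).differentiableAt (hs.mem_nhds hz)).hasFDerivAt
  exact hdiff.comp_hasDerivAt x ((hasDerivAt_const x t).prodMk (hasDerivAt_id' x))

lemma exists_isBoundedAmplitude_snd {f : ℝ × ℝ → ℝ} {s Z : Set (ℝ × ℝ)} (hs : IsOpen s)
    (hf : ContDiffOn ℝ 2 f s) (hZ : IsCompact Z) (hZs : Z ⊆ s) :
    ∃ (f' f'' : ℝ × ℝ → ℝ) (B B' : ℝ), ∀ t, ∀ S : Set ℝ, (∀ x ∈ S, (t, x) ∈ Z) →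
      (∀ x ∈ S, HasDerivAt (fun x => (f (t, x) : ℂ)) (f' (t, x) : ℂ) x) ∧
      IsBoundedAmplitude (fun x => (f' (t, x) : ℂ)) (fun x => (f'' (t, x) : ℂ)) B B' S := by
  obtain ⟨f', hf'c, hf'⟩ := exists_contDiffOn_hasDerivAt_snd (r := 1) hs (by exact_mod_cast hf)
  obtain ⟨f'', hf''c, hf''⟩ := exists_contDiffOn_hasDerivAt_snd (r := 0) hs (by exact_mod_cast hf'c)
  obtain ⟨B, hB⟩ := hZ.exists_bound_of_continuousOn (hf'c.continuousOn.mono hZs)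
  obtain ⟨B', hB'⟩ := hZ.exists_bound_of_continuousOn (hf''c.continuousOn.mono hZs)
  refine ⟨f', f'', B, B', fun t S hS => ⟨fun x hx => (hf' t x (hZs (hS x hx))).ofReal_comp, ?_⟩⟩
  have hmaps : Set.MapsTo (fun x => (t, x)) S s := fun x hx => hZs (hS x hx)
  exact
    { hasDerivAt := fun x hx => (hf'' t x (hmaps hx)).ofReal_comp
      continuousOn_deriv := Complex.continuous_ofReal.comp_continuousOn
        (hf''c.continuousOn.comp (by fun_prop) hmaps)
      norm_le := fun x hx => by simpa using hB _ (hS x hx)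
      norm_deriv_le := fun x hx => by simpa using hB' _ (hS x hx) }

/-- A phase `μ` with derivative `v` and thrice continuously differentiable second derivative `φ`. -/
structure IsSmoothPhase (μ v φ : ℝ → ℝ) : Prop where
  hasDerivAt : ∀ t, HasDerivAt μ (v t) t
  hasDerivAt_deriv : ∀ t, HasDerivAt v (φ t) t
  contDiff : ContDiff ℝ 3 φ

/-- The phase `μ` minus a linear function, chosen so that `t` becomes a stationary point; here `v`
is the derivative of `μ`. -/
def tiltedPhase (μ v : ℝ → ℝ) (t s : ℝ) : ℝ := μ s - v t * s

section UniformStationaryPhase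

variable {μ v φ g : ℝ → ℝ} {α β a b m n t x R : ℝ}

lemma IsSmoothPhase.comp_neg (hμ : IsSmoothPhase μ v φ) :
    IsSmoothPhase (fun s => μ (-s)) (fun s => -v (-s)) (fun s => φ (-s)) where
  hasDerivAt s := ((hμ.hasDerivAt (-s)).comp s (hasDerivAt_neg s)).congr_deriv (by ring)
  hasDerivAt_deriv s :=
    ((hμ.hasDerivAt_deriv (-s)).comp s (hasDerivAt_neg s)).neg.congr_deriv (by ring)
  contDiff := hμ.contDiff.comp contDiff_neg

lemma IsSmoothPhase.deriv_add_sub (hμ : IsSmoothPhase μ v φ) (t x : ℝ) :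
    v (t + x) - v t = x * taylorMean 0 φ t x := by
  rw [add_eq_add_mul_taylorMean hμ.hasDerivAt_deriv hμ.contDiff.continuous, add_sub_cancel_left]

lemma IsSmoothPhase.tiltedPhase_add_sub (hμ : IsSmoothPhase μ v φ) (t x : ℝ) :
    tiltedPhase μ v t (t + x) - tiltedPhase μ v t t = x ^ 2 * taylorMean 1 φ t x := by
  have hv : Continuous v :=
    continuous_iff_continuousAt.2 fun s => (hμ.hasDerivAt_deriv s).continuousAt
  have hexp := add_eq_add_mul_taylorMean hμ.hasDerivAt hv t x
  have hexp' := taylorMean_succ hμ.hasDerivAt_deriv hμ.contDiff.continuous 0 t x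
  simp only [CharP.cast_eq_zero, zero_add, one_mul] at hexp'
  simp only [tiltedPhase]
  linear_combination hexp + x * hexp'

lemma IsSmoothPhase.hasDerivAt_tiltedPhase (hμ : IsSmoothPhase μ v φ) (t s : ℝ) :
    HasDerivAt (tiltedPhase μ v t) (v s - v t) s :=
  ((hμ.hasDerivAt s).sub ((hasDerivAt_id' s).const_mul (v t))).congr_deriv (by ring)

lemma osc_add_tiltedPhase (n : ℝ) (μ v : ℝ → ℝ) (t x : ℝ) :
    osc n (tiltedPhase μ v t) (t + x) = osc n (tiltedPhase μ v t) t
      * osc n (fun x => tiltedPhase μ v t (t + x) - tiltedPhase μ v t t) x := by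
  rw [osc, osc, osc, ← Complex.exp_add]
  congr 1
  push_cast
  ring

lemma IsSmoothPhase.isStationaryPhase (hμ : IsSmoothPhase μ v φ) {s : Set ℝ} {D : ℝ} (hm : 0 < m)
    (hlow : ∀ x ∈ s, 0 ≤ x ∧ m ≤ taylorMean 0 φ t x) (hD : ∀ x ∈ s, |φ (t + x)| ≤ D) :
    IsStationaryPhase (fun x => tiltedPhase μ v t (t + x) - tiltedPhase μ v t t)
      (fun x => v (t + x) - v t) (fun x => φ (t + x)) m D s where
  pos := hm
  hasDerivAt x _ := ((hμ.hasDerivAt_tiltedPhase t (t + x)).comp_const_add t x).sub_const _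
  hasDerivAt_deriv x _ := ((hμ.hasDerivAt_deriv (t + x)).comp_const_add t x).sub_const _
  continuousOn_deriv₂ := by
    have := hμ.contDiff.continuous
    fun_prop
  le_deriv x hx := by
    rw [hμ.deriv_add_sub, mul_comm]
    exact mul_le_mul_of_nonneg_left (hlow x hx).2 (hlow x hx).1
  abs_deriv₂_le := hD

lemma IsSmoothPhase.hasDerivAt_morseCoordinate (hμ : IsSmoothPhase μ v φ) (hx : 0 < x)
    (hz : (t, x) ∈ morseDomain φ) :
    HasDerivAt (fun x => √(2 * (tiltedPhase μ v t (t + x) - tiltedPhase μ v t t)))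
      (taylorMean 0 φ t x / √(2 * taylorMean 1 φ t x)) x := by
  have hp : 0 < 2 * taylorMean 1 φ t x := mul_pos two_pos hz.2.2
  have hsq : 2 * (tiltedPhase μ v t (t + x) - tiltedPhase μ v t t)
      = x ^ 2 * (2 * taylorMean 1 φ t x) := by
    rw [hμ.tiltedPhase_add_sub]; ring
  have hderiv := (((hμ.hasDerivAt_tiltedPhase t (t + x)).comp_const_add t x).sub_const
    (tiltedPhase μ v t t)).const_mul 2
  refine (hderiv.sqrt (by rw [hsq]; positivity)).congr_deriv ?_
  rw [hsq, Real.sqrt_mul (sq_nonneg x), Real.sqrt_sq hx.le, hμ.deriv_add_sub]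
  field_simp

lemma IsSmoothPhase.div_deriv_sub_eq (hμ : IsSmoothPhase μ v φ) (hg : ContDiff ℝ 1 g) (hx : 0 < x)
    (hz : (t, x) ∈ morseDomain φ) :
    g (t + x) / (v (t + x) - v t) =
      g t / √(φ t) / (x * √(2 * taylorMean 1 φ t x)) + morseAmplitude φ g t x := by
  have hq := hz.2.1
  have hp : 0 < √(2 * taylorMean 1 φ t x) := Real.sqrt_pos.2 (mul_pos two_pos hz.2.2)
  rw [hμ.deriv_add_sub, eq_add_mul_morseAmplitude (hμ.contDiff.of_le (by norm_num)) hg hz]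
  set G := g t / √(φ t)
  dsimp only at hq hp
  field_simp

lemma IsSmoothPhase.integral_osc_right_eq (hμ : IsSmoothPhase μ v φ) (hg : ContDiff ℝ 1 g)
    (htb : t ≤ b) (hdom : ∀ x ∈ Set.Icc 0 (b - t), (t, x) ∈ morseDomain φ) (n : ℝ) :
    ∫ s in t..b, osc n (tiltedPhase μ v t) s * g s = osc n (tiltedPhase μ v t) t *
      ∫ x in (0 : ℝ)..(b - t), osc n (fun x => tiltedPhase μ v t (t + x) - tiltedPhase μ v t t) x *
        ((g t / √(φ t) : ℝ) * (taylorMean 0 φ t x / √(2 * taylorMean 1 φ t x) : ℝ)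
          + (v (t + x) - v t : ℝ) * morseAmplitude φ g t x) := by
  have hshift := intervalIntegral.integral_comp_add_left (a := 0) (b := b - t)
    (fun s => osc n (tiltedPhase μ v t) s * g s) t
  rw [add_zero, add_sub_cancel] at hshift
  rw [← hshift, ← intervalIntegral.integral_const_mul]
  refine intervalIntegral.integral_congr fun x hx => ?_
  rw [Set.uIcc_of_le (sub_nonneg.2 htb)] at hx
  simp only [osc_add_tiltedPhase, hμ.deriv_add_sub,
    eq_add_mul_morseAmplitude (hμ.contDiff.of_le (by norm_num)) hg (hdom x hx)]
  push_cast
  ring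

lemma IsSmoothPhase.norm_integral_osc_right_sub_le {B B' D : ℝ} {k' k'' : ℝ → ℂ}
    (hμ : IsSmoothPhase μ v φ) (hg : ContDiff ℝ 1 g) (hn : 0 < n) (hm : 0 < m) (htb : t < b)
    (hdom : ∀ x ∈ Set.Icc 0 (b - t), (t, x) ∈ morseDomain φ)
    (hlow : ∀ x ∈ Set.Icc 0 (b - t), m ≤ taylorMean 0 φ t x)
    (hD : ∀ x ∈ Set.Icc 0 (b - t), |φ (t + x)| ≤ D)
    (hk : ∀ x ∈ Set.Icc 0 (b - t), HasDerivAt (fun x => (morseAmplitude φ g t x : ℂ)) (k' x) x)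
    (hk' : IsBoundedAmplitude k' k'' B B' (Set.Icc 0 (b - t))) :
    ‖(∫ s in t..b, osc n (tiltedPhase μ v t) s * g s) -
      (osc n (tiltedPhase μ v t) t * ((g t / √(φ t) : ℝ) *
          (√(2 * Real.pi / n) / 2 * Complex.exp ((Real.pi / 4 : ℝ) * Complex.I)))
        + (osc n (tiltedPhase μ v t) b * (g b / (v b - v t) : ℝ)
          - osc n (tiltedPhase μ v t) t * morseAmplitude φ g t 0) / (Complex.I * n))‖ ≤
      |g t / √(φ t)| * (2 / (n ^ 2 * ((b - t) * √(2 * taylorMean 1 φ t (b - t))) ^ 3)) +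
        (B + (2 * B / m + (B' * (b - t) / m + B * D / m ^ 2))) / (n * √n) := by
  have hR : 0 < b - t := sub_pos.2 htb
  set R := b - t
  have htR : t + R = b := add_sub_cancel t b
  set F : ℝ → ℝ := fun x => tiltedPhase μ v t (t + x) - tiltedPhase μ v t t with hF_def
  have hφ₁ : ContDiff ℝ 1 φ := hμ.contDiff.of_le (by norm_num)
  have hF (x : ℝ) : F x = x ^ 2 * taylorMean 1 φ t x := hμ.tiltedPhase_add_sub t x
  have hp (x : ℝ) (hx : x ∈ Set.Icc 0 R) : 0 < 2 * taylorMean 1 φ t x :=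
    mul_pos two_pos (hdom x hx).2.2
  have hmean (k : ℕ) : Continuous (taylorMean k φ t) :=
    (contDiff_taylorMean hφ₁ k).continuous.comp (by fun_prop : Continuous fun x => (t, x))
  have hwR : √(2 * F R) = R * √(2 * taylorMean 1 φ t R) := by
    rw [hF, mul_left_comm, Real.sqrt_mul (sq_nonneg R), Real.sqrt_sq hR.le]
  have hRmem : R ∈ Set.Icc 0 R := Set.right_mem_Icc.2 hR.le
  have hmorse := norm_integral_osc_morse_sub_le (G := g t / √(φ t)) (w := fun x => √(2 * F x))
    hn hR.le (hμ.isStationaryPhase hm (fun x hx => ⟨hx.1, hlow x hx⟩) hD)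
    (fun x hx => by
      rw [Real.sq_sqrt (by rw [hF]; nlinarith [hp x hx, sq_nonneg x])]; ring)
    (by simp [hF]) (by rw [hwR]; exact mul_pos hR (Real.sqrt_pos.2 (hp R hRmem)))
    (by simp only [hF]; fun_prop)
    (fun x hx => hμ.hasDerivAt_morseCoordinate hx.1 (hdom x ⟨hx.1.le, hx.2.le⟩))
    ((hmean 0).continuousOn.div (by fun_prop) fun x hx => (Real.sqrt_pos.2 (hp x hx)).ne') hk hk'
  have hosc := osc_add_tiltedPhase n μ v t R
  have hend := hμ.div_deriv_sub_eq hg hR (hdom R hRmem)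
  rw [htR] at hosc hend
  rw [hwR, show osc n F 0 = 1 by simp [osc, hF_def]] at hmorse
  refine le_of_eq_of_le ?_ hmorse
  rw [hμ.integral_osc_right_eq hg htb.le hdom, hosc, hend, ← one_mul ‖_ - (_ * (_ + _) + _)‖,
    ← norm_osc n (tiltedPhase μ v t) t, ← norm_mul]
  congr 1
  push_cast
  ring

lemma div_le_taylorMean_of_mem_Icc (hφ : Continuous φ) (hm : 0 ≤ m)
    (hlow : ∀ s ∈ Set.Icc α b, m * (b - s) ≤ φ s) (ht : t ∈ Set.Icc α β)
    (hx : x ∈ Set.Icc 0 (b - t)) (k : ℕ) :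
    m * (b - β) / (k + 2) ≤ taylorMean k φ t x := by
  refine div_le_taylorMean hφ (fun u hu => ?_) k
  have hux : 0 ≤ u * x := mul_nonneg hu.1 hx.1
  have hux' : u * x ≤ u * (b - t) := mul_le_mul_of_nonneg_left hx.2 hu.1
  have hbt : (b - β) * (1 - u) ≤ (b - t) * (1 - u) :=
    mul_le_mul_of_nonneg_right (by linarith [ht.2]) (sub_nonneg.2 hu.2)
  have hmem : t + u * x ∈ Set.Icc α b :=
    ⟨by linarith [ht.1], by nlinarith [mul_le_mul_of_nonneg_right hu.2 (hx.1.trans hx.2)]⟩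
  calc m * (b - β) * (1 - u) = m * ((b - β) * (1 - u)) := by ring
    _ ≤ m * (b - (t + u * x)) := mul_le_mul_of_nonneg_left (by linarith) hm
    _ ≤ φ (t + u * x) := hlow _ hmem

lemma mem_morseDomain_of_mem_Icc (hφ : Continuous φ) (hm : 0 < m) (hβb : β < b)
    (hlow : ∀ s ∈ Set.Icc α b, m * (b - s) ≤ φ s) (ht : t ∈ Set.Icc α β)
    (hx : x ∈ Set.Icc 0 (b - t)) : (t, x) ∈ morseDomain φ := by
  have hpos (k : ℕ) : 0 < taylorMean k φ t x :=
    (div_pos (mul_pos hm (sub_pos.2 hβb)) (by positivity)).trans_le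
      (div_le_taylorMean_of_mem_Icc hφ hm.le hlow ht hx k)
  exact ⟨(mul_pos hm (by linarith [ht.2])).trans_le (hlow t ⟨ht.1, ht.2.trans hβb.le⟩),
    hpos 0, hpos 1⟩

lemma isCompact_setOf_mem_Icc_sub (α β b : ℝ) :
    IsCompact {z : ℝ × ℝ | z.1 ∈ Set.Icc α β ∧ z.2 ∈ Set.Icc 0 (b - z.1)} := by
  refine ((isCompact_Icc (a := α) (b := β)).prod
    (isCompact_Icc (a := 0) (b := b - α))).of_isClosed_subset ?_
    fun z hz => ⟨hz.1, hz.2.1, by linarith [hz.2.2, hz.1.1]⟩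
  exact (isClosed_Icc.preimage continuous_fst).inter
    ((isClosed_le continuous_const continuous_snd).inter
      (isClosed_le continuous_snd (continuous_const.sub continuous_fst)))

lemma mul_add_div_le_div_mul_sqrt {E E' G G' ω w : ℝ} (hn : 1 ≤ n) (hω : 0 < ω) (hωw : ω ≤ w)
    (hG : |G'| ≤ G) (hE : E ≤ E') :
    |G'| * (2 / (n ^ 2 * w ^ 3)) + E / (n * √n) ≤ (G * (2 / ω ^ 3) + E') / (n * √n) := by
  have hsq : n * √n ≤ n ^ 2 := by
    rw [sq]
    exact mul_le_mul_of_nonneg_left (Real.sqrt_le_self_iff.2 (.inr hn)) (by linarith)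
  have hG0 : 0 ≤ G := (abs_nonneg _).trans hG
  have hw : 0 < w := hω.trans_le hωw
  calc |G'| * (2 / (n ^ 2 * w ^ 3)) + E / (n * √n)
      ≤ G * (2 / (n * √n * ω ^ 3)) + E' / (n * √n) := by gcongr
    _ = (G * (2 / ω ^ 3) + E') / (n * √n) := by field_simp

lemma IsSmoothPhase.exists_norm_integral_osc_right_sub_le (hμ : IsSmoothPhase μ v φ)
    (hg : ContDiff ℝ 3 g) (hm : 0 < m) (hβb : β < b)
    (hlow : ∀ s ∈ Set.Icc α b, m * (b - s) ≤ φ s) :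
    ∃ C : ℝ, ∀ t ∈ Set.Icc α β, ∀ n : ℝ, 1 ≤ n →
      ‖(∫ s in t..b, osc n (tiltedPhase μ v t) s * g s) -
        (osc n (tiltedPhase μ v t) t * ((g t / √(φ t) : ℝ) *
            (√(2 * Real.pi / n) / 2 * Complex.exp ((Real.pi / 4 : ℝ) * Complex.I)))
          + (osc n (tiltedPhase μ v t) b * (g b / (v b - v t) : ℝ)
            - osc n (tiltedPhase μ v t) t * morseAmplitude φ g t 0) / (Complex.I * n))‖ ≤
        C / (n * √n) := by
  have hφ := hμ.contDiff.continuous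
  have hdom {t x : ℝ} (ht : t ∈ Set.Icc α β) (hx : x ∈ Set.Icc 0 (b - t)) :=
    mem_morseDomain_of_mem_Icc hφ hm hβb hlow ht hx
  obtain ⟨k', k'', B, B', hk⟩ := exists_isBoundedAmplitude_snd (isOpen_morseDomain hφ)
    (contDiffOn_morseAmplitude (r := 2) (hμ.contDiff.of_le (by norm_num)) (hg.of_le (by norm_num)))
    (isCompact_setOf_mem_Icc_sub α β b) fun z hz => hdom hz.1 hz.2
  obtain ⟨D, hD⟩ := isCompact_Icc.exists_bound_of_continuousOn (hφ.continuousOn (s := Set.Icc α b))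
  obtain ⟨G, hG⟩ := isCompact_Icc.exists_bound_of_continuousOn (s := Set.Icc α β)
    (f := fun t => g t / √(φ t)) (hg.continuous.continuousOn.div (by fun_prop) fun t ht =>
      (Real.sqrt_pos.2 (hdom ht ⟨le_rfl, by linarith [ht.2]⟩).1).ne')
  set m' : ℝ := m * (b - β)
  have hbβ : 0 < b - β := sub_pos.2 hβb
  have hm' : 0 < m' := mul_pos hm hbβ
  have hω : 0 < (b - β) * √(2 * (m' / 3)) := by positivity
  refine ⟨G * (2 / ((b - β) * √(2 * (m' / 3))) ^ 3) +
    (B + (2 * B / (m' / 2) + (B' * (b - α) / (m' / 2) + B * D / (m' / 2) ^ 2))),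
    fun t ht n hn => ?_⟩
  have hbt : b - β ≤ b - t := by linarith [ht.2]
  have hmean {x : ℝ} (hx : x ∈ Set.Icc 0 (b - t)) (k : ℕ) : m' / (k + 2) ≤ taylorMean k φ t x :=
    div_le_taylorMean_of_mem_Icc hφ hm.le hlow ht hx k
  have hlast : b - t ∈ Set.Icc 0 (b - t) := ⟨by linarith, le_rfl⟩
  obtain ⟨hkt, hkt'⟩ := hk t (Set.Icc 0 (b - t)) fun x hx => ⟨ht, hx⟩
  have hB' : 0 ≤ B' := (norm_nonneg _).trans (hkt'.norm_deriv_le _ hlast)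
  have hωt : (b - β) * √(2 * (m' / 3)) ≤ (b - t) * √(2 * taylorMean 1 φ t (b - t)) := by
    have := hmean hlast 1
    norm_num at this
    have := hbβ.le.trans hbt
    gcongr
  refine (hμ.norm_integral_osc_right_sub_le (hg.of_le (by norm_num)) (by linarith) (half_pos hm')
    (by linarith) (fun x hx => hdom ht hx) (fun x hx => by simpa using hmean hx 0)
    (fun x hx => hD _ ⟨by linarith [ht.1, hx.1], by linarith [hx.2]⟩) hkt hkt').trans ?_
  exact mul_add_div_le_div_mul_sqrt hn hω hωt (hG t ht) (by gcongr; exact ht.1)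

lemma tiltedPhase_comp_neg (μ v : ℝ → ℝ) (t s : ℝ) :
    tiltedPhase (fun s => μ (-s)) (fun s => -v (-s)) (-t) s = tiltedPhase μ v t (-s) := by
  simp only [tiltedPhase, neg_neg]
  ring

lemma IsSmoothPhase.exists_norm_integral_osc_left_sub_le (hμ : IsSmoothPhase μ v φ)
    (hg : ContDiff ℝ 3 g) (hm : 0 < m) (haα : a < α)
    (hlow : ∀ s ∈ Set.Icc a β, m * (s - a) ≤ φ s) :
    ∃ C : ℝ, ∀ t ∈ Set.Icc α β, ∀ n : ℝ, 1 ≤ n →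
      ‖(∫ s in a..t, osc n (tiltedPhase μ v t) s * g s) -
        (osc n (tiltedPhase μ v t) t * ((g t / √(φ t) : ℝ) *
            (√(2 * Real.pi / n) / 2 * Complex.exp ((Real.pi / 4 : ℝ) * Complex.I)))
          - (osc n (tiltedPhase μ v t) a * (g a / (v a - v t) : ℝ)
            - osc n (tiltedPhase μ v t) t * morseAmplitude φ g t 0) / (Complex.I * n))‖ ≤
        C / (n * √n) := by
  obtain ⟨C, hC⟩ := hμ.comp_neg.exists_norm_integral_osc_right_sub_le
    (g := fun s => g (-s)) (hg.comp contDiff_neg) hm (neg_lt_neg haα) (α := -β) fun s hs => by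
      rw [neg_sub_comm]
      exact hlow (-s) ⟨le_neg.1 hs.2, neg_le.1 hs.1⟩
  refine ⟨C, fun t ht n hn => ?_⟩
  have hosc (s : ℝ) : osc n (tiltedPhase (fun s => μ (-s)) (fun s => -v (-s)) (-t)) s =
      osc n (tiltedPhase μ v t) (-s) := by
    rw [osc, osc, tiltedPhase_comp_neg]
  have hreflect := intervalIntegral.integral_comp_neg (a := -t) (b := -a)
    fun s => osc n (tiltedPhase μ v t) s * g s
  have hden : g a / (-v a + v t) = -(g a / (v a - v t)) := by
    rw [← div_neg, neg_sub, neg_add_eq_sub]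
  have hright := hC (-t) ⟨neg_le_neg ht.2, neg_le_neg ht.1⟩ n hn
  simp only [hosc, neg_neg, hreflect, morseAmplitude_comp_neg, neg_zero,
    sub_neg_eq_add, hden] at hright
  refine le_of_eq_of_le (congrArg norm ?_) hright
  push_cast
  ring

-- The contributions of order `1 / n` at the stationary point cancel between the two sides, because
-- reflecting `t` changes the sign of `morseAmplitude`.
lemma IsSmoothPhase.exists_norm_integral_osc_sub_le (hμ : IsSmoothPhase μ v φ)
    (hg : ContDiff ℝ 3 g) (hm : 0 < m) (haα : a < α) (hβb : β < b)
    (hlow : ∀ s ∈ Set.Icc a b, m * ((s - a) * (b - s)) ≤ φ s) :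
    ∃ C : ℝ, ∀ t ∈ Set.Icc α β, ∀ n : ℝ, 1 ≤ n →
      ‖(∫ s in a..b, osc n (tiltedPhase μ v t) s * g s) -
        (osc n (tiltedPhase μ v t) t * ((g t / √(φ t) * √(2 * Real.pi / n) : ℝ)
            * Complex.exp ((Real.pi / 4 : ℝ) * Complex.I))
          + (osc n (tiltedPhase μ v t) b * (g b / (v b - v t) : ℝ)
            - osc n (tiltedPhase μ v t) a * (g a / (v a - v t) : ℝ)) / (Complex.I * n))‖ ≤
        C / (n * √n) := by
  obtain ⟨C₁, hC₁⟩ := hμ.exists_norm_integral_osc_right_sub_le hg (mul_pos hm (sub_pos.2 haα)) hβb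
    (α := α) fun s hs => by
      refine le_trans ?_ (hlow s ⟨haα.le.trans hs.1, hs.2⟩)
      rw [mul_assoc]
      have := sub_nonneg.2 hs.2
      gcongr
      exact hs.1
  obtain ⟨C₂, hC₂⟩ := hμ.exists_norm_integral_osc_left_sub_le hg (mul_pos hm (sub_pos.2 hβb)) haα
    (β := β) fun s hs => by
      refine le_trans ?_ (hlow s ⟨hs.1, hs.2.trans hβb.le⟩)
      rw [mul_assoc, mul_comm (b - β)]
      have := sub_nonneg.2 hs.1
      gcongr
      exact hs.2
  refine ⟨C₂ + C₁, fun t ht n hn => ?_⟩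
  have hcont : Continuous fun s => osc n (tiltedPhase μ v t) s * g s :=
    (continuousOn_univ.1 (continuousOn_osc n (HasDerivAt.continuousOn fun s _ =>
      hμ.hasDerivAt_tiltedPhase t s))).mul (Complex.continuous_ofReal.comp hg.continuous)
  rw [← intervalIntegral.integral_add_adjacent_intervals (hcont.intervalIntegrable a t)
    (hcont.intervalIntegrable t b), add_div]
  refine le_of_eq_of_le (congrArg norm ?_) (norm_add_le_of_le (hC₂ t ht n hn) (hC₁ t ht n hn))
  push_cast
  ring

end UniformStationaryPhase

/-! ### The walk in Fourier space -/

section CosineCoefficient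

/-- The cosine coefficient `(1 / 2π) ∫ f(t) cos (y t) dt` over one period. The period starts at
`-π / 2` so that `t ↦ t + π` exchanges the halves on which `cos` has constant sign. -/
def cosCoeff (f : ℝ → ℝ) (y : ℤ) : ℝ :=
  (∫ t in -(Real.pi / 2)..(3 * Real.pi / 2), f t * Real.cos (y * t)) / (2 * Real.pi)

variable {f g : ℝ → ℝ}

lemma cosCoeff_add (hf : Continuous f) (hg : Continuous g) (y : ℤ) :
    cosCoeff (fun t => f t + g t) y = cosCoeff f y + cosCoeff g y := by
  simp only [cosCoeff, add_mul]
  rw [intervalIntegral.integral_add, add_div] <;>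
    exact Continuous.intervalIntegrable (by fun_prop) _ _

lemma cosCoeff_sub (hf : Continuous f) (hg : Continuous g) (y : ℤ) :
    cosCoeff (fun t => f t - g t) y = cosCoeff f y - cosCoeff g y := by
  simp only [cosCoeff, sub_mul]
  rw [intervalIntegral.integral_sub, sub_div] <;>
    exact Continuous.intervalIntegrable (by fun_prop) _ _

lemma cosCoeff_const_mul (k : ℝ) (f : ℝ → ℝ) (y : ℤ) :
    cosCoeff (fun t => k * f t) y = k * cosCoeff f y := by
  simp only [cosCoeff, mul_assoc]
  rw [intervalIntegral.integral_const_mul, mul_div_assoc]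

lemma cosCoeff_one (y : ℤ) : cosCoeff (fun _ => 1) y = if y = 0 then 1 else 0 := by
  simp only [cosCoeff, one_mul]
  split_ifs with hy
  · subst hy
    simp only [Int.cast_zero, zero_mul, Real.cos_zero, intervalIntegral.integral_const, smul_eq_mul]
    field_simp
    ring
  · have hperiod : (y : ℝ) * (3 * Real.pi / 2) = y * -(Real.pi / 2) + y * (2 * Real.pi) := by ring
    rw [intervalIntegral.integral_comp_mul_left Real.cos (Int.cast_ne_zero.2 hy), integral_cos,
      hperiod, Real.sin_add_int_mul_two_pi, sub_self, smul_zero, zero_div]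

lemma cosCoeff_sub_one_add_add_one (hf : Continuous f) (y : ℤ) :
    cosCoeff f (y - 1) + cosCoeff f (y + 1) = 2 * cosCoeff (fun t => Real.cos t * f t) y := by
  rw [← cosCoeff_const_mul]
  simp only [cosCoeff]
  rw [← add_div, ← intervalIntegral.integral_add]
  · congr with t
    push_cast
    rw [sub_one_mul, add_one_mul, Real.cos_add, Real.cos_sub]
    ring
  all_goals exact Continuous.intervalIntegrable (by fun_prop) _ _

lemma mul_cosCoeff_eq_of_hasDerivAt (hf : ∀ t, HasDerivAt f (-(Real.sin t * g t)) t)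
    (hg : Continuous g) (hper : Function.Periodic f (2 * Real.pi)) (y : ℤ) :
    y * cosCoeff f y = (cosCoeff g (y - 1) - cosCoeff g (y + 1)) / 2 := by
  have hfc : Continuous f := continuous_iff_continuousAt.2 fun t => (hf t).continuousAt
  have hderiv (t : ℝ) : HasDerivAt (fun t => f t * Real.sin (y * t))
      (y * (f t * Real.cos (y * t)) -
        (g t * Real.cos ((y - 1 : ℤ) * t) - g t * Real.cos ((y + 1 : ℤ) * t)) / 2) t := by
    refine ((hf t).mul ((hasDerivAt_id' t).const_mul (y : ℝ)).sin).congr_deriv ?_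
    push_cast
    rw [sub_one_mul, add_one_mul, Real.cos_add, Real.cos_sub]
    ring
  have hboundary : f (3 * Real.pi / 2) * Real.sin (y * (3 * Real.pi / 2)) =
      f (-(Real.pi / 2)) * Real.sin (y * -(Real.pi / 2)) := by
    have hend : 3 * Real.pi / 2 = -(Real.pi / 2) + 2 * Real.pi := by ring
    rw [hend, hper, mul_add, Real.sin_add_int_mul_two_pi]
  have hint := intervalIntegral.integral_eq_sub_of_hasDerivAt (a := -(Real.pi / 2))
    (b := 3 * Real.pi / 2) (fun t _ => hderiv t) (Continuous.intervalIntegrable (by fun_prop) _ _)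
  rw [hboundary, sub_self, intervalIntegral.integral_sub, intervalIntegral.integral_const_mul,
    intervalIntegral.integral_div, intervalIntegral.integral_sub, sub_eq_zero] at hint
  · simp only [cosCoeff]
    rw [← mul_div_assoc, hint]
    ring
  all_goals exact Continuous.intervalIntegrable (by fun_prop) _ _

lemma cosCoeff_eq_of_add_pi (hf : Continuous f) {n : ℤ}
    (hshift : ∀ t, f (t + Real.pi) = (-1) ^ n * f t) (y : ℤ) :
    cosCoeff f y = (1 + (-1) ^ (n + y)) / 2 *
      ((∫ t in -(Real.pi / 2)..(Real.pi / 2), f t * Real.cos (y * t)) / Real.pi) := by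
  have hsecond : (∫ t in (Real.pi / 2)..(3 * Real.pi / 2), f t * Real.cos (y * t)) =
      (-1) ^ (n + y) * ∫ t in -(Real.pi / 2)..(Real.pi / 2), f t * Real.cos (y * t) := by
    have htranslate := intervalIntegral.integral_comp_add_right (a := -(Real.pi / 2))
      (b := Real.pi / 2) (fun t => f t * Real.cos (y * t)) Real.pi
    rw [show -(Real.pi / 2) + Real.pi = Real.pi / 2 by ring,
      show Real.pi / 2 + Real.pi = 3 * Real.pi / 2 by ring] at htranslate
    rw [← htranslate, ← intervalIntegral.integral_const_mul]
    congr with t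
    rw [hshift, mul_add, Real.cos_add_int_mul_pi, zpow_add₀ (by norm_num)]
    ring
  have hint (p q : ℝ) : IntervalIntegrable (fun t => f t * Real.cos (y * t)) volume p q :=
    Continuous.intervalIntegrable (by fun_prop) _ _
  rw [cosCoeff, ← intervalIntegral.integral_add_adjacent_intervals (hint _ (Real.pi / 2))
    (hint _ _), hsecond]
  field_simp

end CosineCoefficient

section ChebyshevCoefficient

/-- The cosine coefficients of `U_n(c cos t)`, where `U_n` is the Chebyshev polynomial of the
second kind. They carry the iterates of the walk, because its Fourier transform has determinant `1`
and trace `2 c cos t` up to a translation of `t`. -/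
def chebyshevCoeff (c : ℝ) (n y : ℤ) : ℝ :=
  cosCoeff (fun t => (Polynomial.Chebyshev.U ℝ n).eval (c * Real.cos t)) y

variable {c : ℝ}

@[fun_prop]
lemma continuous_eval_mul_cos (p : Polynomial ℝ) (c : ℝ) :
    Continuous fun t => p.eval (c * Real.cos t) :=
  p.continuous.comp (by fun_prop)

lemma chebyshevCoeff_neg_one (c : ℝ) (y : ℤ) : chebyshevCoeff c (-1) y = 0 := by
  simp [chebyshevCoeff, cosCoeff]

lemma chebyshevCoeff_zero (c : ℝ) (y : ℤ) : chebyshevCoeff c 0 y = if y = 0 then 1 else 0 := by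
  simp only [chebyshevCoeff, Polynomial.Chebyshev.U_zero, Polynomial.eval_one, cosCoeff_one]

lemma chebyshevCoeff_add_one (c : ℝ) (n y : ℤ) :
    chebyshevCoeff c (n + 1) y =
      c * (chebyshevCoeff c n (y - 1) + chebyshevCoeff c n (y + 1)) -
        chebyshevCoeff c (n - 1) y := by
  simp only [chebyshevCoeff]
  rw [cosCoeff_sub_one_add_add_one (by fun_prop), mul_left_comm, ← cosCoeff_const_mul,
    ← cosCoeff_const_mul, ← cosCoeff_sub (by fun_prop) (by fun_prop)]
  congr with t
  simp only [Polynomial.Chebyshev.U_add_one, Polynomial.eval_sub, Polynomial.eval_mul,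
    Polynomial.eval_ofNat, Polynomial.eval_X]
  ring

/-- The cosine coefficients of `T_n(c cos t) = cos (n μ(t))`. -/
def chebyshevCoeffT (c : ℝ) (n y : ℤ) : ℝ :=
  cosCoeff (fun t => (Polynomial.Chebyshev.T ℝ n).eval (c * Real.cos t)) y

/-- The cosine coefficients of `U_{n - 1}(c cos t) cos t = sin (n μ(t)) cos t / sin μ(t)`. -/
def chebyshevCoeffM (c : ℝ) (n y : ℤ) : ℝ :=
  cosCoeff (fun t => Real.cos t * (Polynomial.Chebyshev.U ℝ (n - 1)).eval (c * Real.cos t)) y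

lemma chebyshevCoeff_eq_add (c : ℝ) (n y : ℤ) :
    chebyshevCoeff c n y = chebyshevCoeffT c n y + c * chebyshevCoeffM c n y := by
  rw [chebyshevCoeff, chebyshevCoeffT, chebyshevCoeffM, ← cosCoeff_const_mul,
    ← cosCoeff_add (by fun_prop) (by fun_prop)]
  congr with t
  simp only [Polynomial.Chebyshev.T_eq_U_sub_X_mul_U, Polynomial.eval_sub, Polynomial.eval_mul,
    Polynomial.eval_X]
  ring

lemma mul_chebyshevCoeffT (c : ℝ) (n y : ℤ) :
    y * chebyshevCoeffT c n y =
      n * c * (chebyshevCoeff c (n - 1) (y - 1) - chebyshevCoeff c (n - 1) (y + 1)) / 2 := by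
  have hderiv (t : ℝ) :
      HasDerivAt (fun t => (Polynomial.Chebyshev.T ℝ n).eval (c * Real.cos t))
        (-(Real.sin t * (n * c * (Polynomial.Chebyshev.U ℝ (n - 1)).eval (c * Real.cos t)))) t := by
    refine (((Polynomial.Chebyshev.T ℝ n).hasDerivAt _).comp t
      ((Real.hasDerivAt_cos t).const_mul c)).congr_deriv ?_
    simp only [Polynomial.Chebyshev.T_derivative_eq_U, Polynomial.eval_mul, Polynomial.eval_intCast]
    ring
  rw [chebyshevCoeffT, mul_cosCoeff_eq_of_hasDerivAt hderiv (by fun_prop)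
    (fun t => by simp only [Real.cos_add_two_pi]), cosCoeff_const_mul, cosCoeff_const_mul,
    chebyshevCoeff, chebyshevCoeff]
  ring

lemma chebyshevCoeff_sub_one_apply_sub_one {n y : ℤ} (hc : c ≠ 0) (hn : n ≠ 0) :
    chebyshevCoeff c (n - 1) (y - 1) =
      chebyshevCoeffM c n y + y / n * chebyshevCoeffT c n y / c := by
  have hn' : (n : ℝ) ≠ 0 := Int.cast_ne_zero.2 hn
  have hsum := cosCoeff_sub_one_add_add_one (continuous_eval_mul_cos
    (Polynomial.Chebyshev.U ℝ (n - 1)) c) y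
  have hdiff := mul_chebyshevCoeffT c n y
  rw [chebyshevCoeff, chebyshevCoeff] at hdiff
  rw [chebyshevCoeff, chebyshevCoeffM]
  field_simp
  linear_combination (n * c / 2) * hsum - hdiff

lemma chebyshevCoeff_sub_one_apply_add_one {n y : ℤ} (hc : c ≠ 0) (hn : n ≠ 0) :
    chebyshevCoeff c (n - 1) (y + 1) =
      chebyshevCoeffM c n y - y / n * chebyshevCoeffT c n y / c := by
  have hsum := cosCoeff_sub_one_add_add_one (continuous_eval_mul_cos
    (Polynomial.Chebyshev.U ℝ (n - 1)) c) y
  have hpred := chebyshevCoeff_sub_one_apply_sub_one (y := y) hc hn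
  rw [chebyshevCoeff, chebyshevCoeffM] at hpred ⊢
  linear_combination hsum - hpred

end ChebyshevCoefficient

lemma qwStep_iterate_qwDelta {a b u : ℂ} {c : ℝ} (ha : a = c * u) (hu : ‖u‖ = 1)
    (hb : c ^ 2 + ‖b‖ ^ 2 = 1) (φ : ℂ × ℂ) (n : ℕ) (y : ℤ) :
    (qwStep a b)^[n] (qwDelta φ) y =
      (u ^ (-y) *
        ((chebyshevCoeff c n y - c * chebyshevCoeff c (n - 1) (y - 1) : ℝ) * φ.1
          + (chebyshevCoeff c (n - 1) (y - 1) : ℝ) * (b * u * φ.2)),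
       u ^ (-y) *
        ((chebyshevCoeff c (n - 1) (y + 1) : ℝ) * -((starRingEnd ℂ) (b * u) * φ.1)
          + (chebyshevCoeff c n y - c * chebyshevCoeff c (n - 1) (y + 1) : ℝ) * φ.2)) := by
  have hu₀ : u ≠ 0 := norm_ne_zero_iff.1 (hu.trans_ne one_ne_zero)
  have hconj : (starRingEnd ℂ) u = u⁻¹ := (Complex.inv_eq_conj hu).symm
  have huu : u * u⁻¹ = 1 := mul_inv_cancel₀ hu₀
  have hbb : b * (starRingEnd ℂ) b = 1 - (c : ℂ) ^ 2 := by
    rw [Complex.mul_conj, Complex.normSq_eq_norm_sq, eq_sub_of_add_eq' hb]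
    push_cast
    rfl
  subst ha
  induction n generalizing y with
  | zero =>
    simp only [Function.iterate_zero, id, Nat.cast_zero, zero_sub, chebyshevCoeff_neg_one,
      chebyshevCoeff_zero, qwDelta]
    split_ifs with hy
    · simp [hy]
    · simp [Prod.ext_iff]
  | succ n ih =>
    have hright : u ^ (-(y + 1)) = u ^ (-y) * u⁻¹ := by
      rw [neg_add, zpow_add₀ hu₀, zpow_neg_one]
    have hleft : u ^ (-(y - 1)) = u ^ (-y) * u := by
      rw [neg_sub, sub_eq_neg_add, zpow_add_one₀ hu₀]
    have hrec := chebyshevCoeff_add_one c n y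
    rw [Function.iterate_succ_apply']
    simp only [qwStep, ih, sub_add_cancel, add_sub_cancel_right, hright, hleft, Nat.cast_add,
      Nat.cast_one, hrec, map_mul, hconj, Complex.conj_ofReal]
    push_cast
    generalize (chebyshevCoeff c (n - 1) y : ℂ) = w
    generalize (chebyshevCoeff c n (y + 1) : ℂ) = k₁
    generalize (chebyshevCoeff c n (y - 1) : ℂ) = k₂
    refine Prod.ext ?_ ?_
    · linear_combination u ^ (-y) * (c * (k₁ - c * w) * φ.1 + c * w * (b * u * φ.2)
        - w * φ.1 * (b * (starRingEnd ℂ) b)) * huu - u ^ (-y) * w * φ.1 * hbb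
    · linear_combination u ^ (-y) * (c * (k₂ - c * w) * φ.2
        - c * w * ((starRingEnd ℂ) b * u⁻¹ * φ.1)
        - w * φ.2 * (b * (starRingEnd ℂ) b)) * huu - u ^ (-y) * w * φ.2 * hbb

/-! ### The dispersion relation -/

section Dispersion

/-- The dispersion relation `μ(t) = arccos (c cos t)` of the walk. -/
def dispersion (c t : ℝ) : ℝ := Real.arccos (c * Real.cos t)

/-- The derivative `μ'` of the dispersion relation. -/
def groupVelocity (c t : ℝ) : ℝ := c * Real.sin t / Real.sin (dispersion c t)

/-- The second derivative `μ''` of the dispersion relation. -/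
def groupVelocityDeriv (c t : ℝ) : ℝ :=
  c * (1 - c ^ 2) * Real.cos t / Real.sin (dispersion c t) ^ 3

variable {c : ℝ}

lemma abs_mul_cos_lt_one (hc : |c| < 1) (t : ℝ) : |c * Real.cos t| < 1 := by
  rw [abs_mul]
  exact (mul_le_of_le_one_right (abs_nonneg c) (Real.abs_cos_le_one t)).trans_lt hc

lemma cos_dispersion (hc : |c| < 1) (t : ℝ) : Real.cos (dispersion c t) = c * Real.cos t :=
  have h := abs_lt.1 (abs_mul_cos_lt_one hc t)
  Real.cos_arccos h.1.le h.2.le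

lemma sin_dispersion (c t : ℝ) :
    Real.sin (dispersion c t) = √(1 - (c * Real.cos t) ^ 2) := Real.sin_arccos _

lemma sin_dispersion_pos (hc : |c| < 1) (t : ℝ) : 0 < Real.sin (dispersion c t) := by
  rw [sin_dispersion]
  exact Real.sqrt_pos.2 (sub_pos.2 ((sq_lt_one_iff_abs_lt_one _).2 (abs_mul_cos_lt_one hc t)))

lemma sin_dispersion_sq (hc : |c| < 1) (t : ℝ) :
    Real.sin (dispersion c t) ^ 2 = 1 - c ^ 2 * Real.cos t ^ 2 := by
  rw [Real.sin_sq, cos_dispersion hc, mul_pow]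

lemma dispersion_neg (c t : ℝ) : dispersion c (-t) = dispersion c t := by
  rw [dispersion, Real.cos_neg, dispersion]

lemma contDiff_sin_dispersion (hc : |c| < 1) {k : WithTop ℕ∞} :
    ContDiff ℝ k fun t => Real.sin (dispersion c t) := by
  simp only [sin_dispersion]
  exact ContDiff.sqrt (by fun_prop) fun t =>
    (sub_pos.2 ((sq_lt_one_iff_abs_lt_one _).2 (abs_mul_cos_lt_one hc t))).ne'

lemma hasDerivAt_dispersion (hc : |c| < 1) (t : ℝ) :
    HasDerivAt (dispersion c) (groupVelocity c t) t := by
  have hcos := abs_lt.1 (abs_mul_cos_lt_one hc t)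
  refine ((Real.hasDerivAt_arccos hcos.1.ne' hcos.2.ne).comp t
    ((Real.hasDerivAt_cos t).const_mul c)).congr_deriv ?_
  rw [groupVelocity, sin_dispersion]
  ring

lemma hasDerivAt_groupVelocity (hc : |c| < 1) (t : ℝ) :
    HasDerivAt (groupVelocity c) (groupVelocityDeriv c t) t := by
  have hpos := sin_dispersion_pos hc t
  refine (((Real.hasDerivAt_sin t).const_mul c).div (hasDerivAt_dispersion hc t).sin
    hpos.ne').congr_deriv ?_
  rw [groupVelocityDeriv, groupVelocity, cos_dispersion hc]
  field_simp
  rw [sin_dispersion_sq hc, Real.cos_sq']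
  ring

lemma isSmoothPhase_dispersion (hc : |c| < 1) :
    IsSmoothPhase (dispersion c) (groupVelocity c) (groupVelocityDeriv c) where
  hasDerivAt := hasDerivAt_dispersion hc
  hasDerivAt_deriv := hasDerivAt_groupVelocity hc
  contDiff := ContDiff.div (by fun_prop) ((contDiff_sin_dispersion hc).pow 3) fun t =>
    pow_ne_zero 3 (sin_dispersion_pos hc t).ne'

lemma groupVelocityDeriv_ge (hc₀ : 0 ≤ c) (hc : c < 1) {t : ℝ}
    (ht : t ∈ Set.Icc (-(Real.pi / 2)) (Real.pi / 2)) :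
    2 * c * (1 - c ^ 2) / Real.pi ^ 2 * ((t - -(Real.pi / 2)) * (Real.pi / 2 - t)) ≤
      groupVelocityDeriv c t := by
  have habs : |c| < 1 := by rwa [abs_of_nonneg hc₀]
  have hsin := sin_dispersion_pos habs t
  have hk : 0 ≤ c * (1 - c ^ 2) := mul_nonneg hc₀ (by nlinarith)
  have ht' : |t| ≤ Real.pi / 2 := abs_le.2 ht
  have hcos : 1 - 2 / Real.pi * |t| ≤ Real.cos t := by
    rw [← Real.cos_abs t]
    exact Real.one_sub_mul_le_cos (abs_nonneg t) ht'
  have hquad : 2 / Real.pi ^ 2 * ((t - -(Real.pi / 2)) * (Real.pi / 2 - t)) ≤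
      1 - 2 / Real.pi * |t| := by
    rw [show (t - -(Real.pi / 2)) * (Real.pi / 2 - t) =
      (Real.pi / 2 + |t|) * (Real.pi / 2 - |t|) by linear_combination sq_abs t]
    have hfactor : (Real.pi / 2 + |t|) * (Real.pi / 2 - |t|) ≤
        Real.pi * (Real.pi / 2 - |t|) := by
      gcongr
      linarith
    refine (mul_le_mul_of_nonneg_left hfactor (by positivity)).trans_eq ?_
    field_simp
  calc _ = c * (1 - c ^ 2) * (2 / Real.pi ^ 2 * ((t - -(Real.pi / 2)) * (Real.pi / 2 - t))) := by
        ring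
    _ ≤ c * (1 - c ^ 2) * Real.cos t := mul_le_mul_of_nonneg_left (hquad.trans hcos) hk
    _ ≤ groupVelocityDeriv c t := le_div_self
        (mul_nonneg hk (Real.cos_nonneg_of_mem_Icc ht)) (pow_pos hsin 3)
        (pow_le_one₀ hsin.le (Real.sin_le_one _))

end Dispersion

section StationaryPoint

/-- The point of `(-π / 2, π / 2)` at which the group velocity is `ξ`, where `s = √(1 - c²)`. -/
def stationaryPoint (c s ξ : ℝ) : ℝ := Real.arcsin (s * ξ / (c * √(1 - ξ ^ 2)))

variable {c s ξ α : ℝ}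

lemma abs_lt_one_of_sq_add_sq (hs : 0 < s) (hcs : c ^ 2 + s ^ 2 = 1) : |c| < 1 :=
  (sq_lt_one_iff_abs_lt_one c).1 (by linarith [pow_pos hs 2])

lemma one_sub_sq_pos (hs : 0 < s) (hcs : c ^ 2 + s ^ 2 = 1) (hξ : |ξ| < c) : 0 < 1 - ξ ^ 2 := by
  linarith [sq_lt_sq.2 (hξ.trans_le (le_abs_self c)), pow_pos hs 2]

lemma one_sub_sq_stationarySine (hc : 0 < c) (hs : 0 < s) (hcs : c ^ 2 + s ^ 2 = 1)
    (hξ : |ξ| < c) :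
    1 - (s * ξ / (c * √(1 - ξ ^ 2))) ^ 2 = (c ^ 2 - ξ ^ 2) / (c ^ 2 * (1 - ξ ^ 2)) := by
  have hpos := one_sub_sq_pos hs hcs hξ
  rw [div_pow, mul_pow, mul_pow, Real.sq_sqrt hpos.le]
  field_simp
  linear_combination -ξ ^ 2 * hcs

lemma abs_stationarySine_lt_one (hc : 0 < c) (hs : 0 < s) (hcs : c ^ 2 + s ^ 2 = 1)
    (hξ : |ξ| < c) : |s * ξ / (c * √(1 - ξ ^ 2))| < 1 := by
  have hpos := one_sub_sq_pos hs hcs hξ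
  have hsub : 0 < c ^ 2 - ξ ^ 2 := sub_pos.2 (sq_lt_sq.2 (hξ.trans_le (le_abs_self c)))
  rw [← sq_lt_one_iff_abs_lt_one, ← sub_pos, one_sub_sq_stationarySine hc hs hcs hξ]
  positivity

lemma sin_stationaryPoint (hc : 0 < c) (hs : 0 < s) (hcs : c ^ 2 + s ^ 2 = 1) (hξ : |ξ| < c) :
    Real.sin (stationaryPoint c s ξ) = s * ξ / (c * √(1 - ξ ^ 2)) :=
  have h := abs_lt.1 (abs_stationarySine_lt_one hc hs hcs hξ)
  Real.sin_arcsin h.1.le h.2.le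

lemma cos_stationaryPoint (hc : 0 < c) (hs : 0 < s) (hcs : c ^ 2 + s ^ 2 = 1) (hξ : |ξ| < c) :
    Real.cos (stationaryPoint c s ξ) = √(c ^ 2 - ξ ^ 2) / (c * √(1 - ξ ^ 2)) := by
  have hsub : 0 ≤ c ^ 2 - ξ ^ 2 := (sub_pos.2 (sq_lt_sq.2 (hξ.trans_le (le_abs_self c)))).le
  rw [stationaryPoint, Real.cos_arcsin, one_sub_sq_stationarySine hc hs hcs hξ,
    Real.sqrt_div hsub, Real.sqrt_mul (sq_nonneg c), Real.sqrt_sq hc.le]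

lemma sin_dispersion_stationaryPoint (hc : 0 < c) (hs : 0 < s) (hcs : c ^ 2 + s ^ 2 = 1)
    (hξ : |ξ| < c) : Real.sin (dispersion c (stationaryPoint c s ξ)) = s / √(1 - ξ ^ 2) := by
  have hpos := one_sub_sq_pos hs hcs hξ
  have hsq : 1 - (c * Real.cos (stationaryPoint c s ξ)) ^ 2 = s ^ 2 / (1 - ξ ^ 2) := by
    rw [mul_pow, Real.cos_sq', sin_stationaryPoint hc hs hcs hξ,
      one_sub_sq_stationarySine hc hs hcs hξ]
    field_simp
    linear_combination -hcs
  rw [sin_dispersion, hsq, Real.sqrt_div (sq_nonneg s), Real.sqrt_sq hs.le]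

lemma groupVelocity_stationaryPoint (hc : 0 < c) (hs : 0 < s) (hcs : c ^ 2 + s ^ 2 = 1)
    (hξ : |ξ| < c) : groupVelocity c (stationaryPoint c s ξ) = ξ := by
  have hroot := Real.sqrt_pos.2 (one_sub_sq_pos hs hcs hξ)
  rw [groupVelocity, sin_dispersion_stationaryPoint hc hs hcs hξ, sin_stationaryPoint hc hs hcs hξ]
  field_simp

lemma groupVelocityDeriv_stationaryPoint (hc : 0 < c) (hs : 0 < s) (hcs : c ^ 2 + s ^ 2 = 1)
    (hξ : |ξ| < c) :
    groupVelocityDeriv c (stationaryPoint c s ξ) = (1 - ξ ^ 2) * √(c ^ 2 - ξ ^ 2) / s := by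
  have hpos := one_sub_sq_pos hs hcs hξ
  rw [groupVelocityDeriv, sin_dispersion_stationaryPoint hc hs hcs hξ,
    cos_stationaryPoint hc hs hcs hξ, ← eq_sub_of_add_eq' hcs]
  nth_rewrite 3 [← Real.sq_sqrt hpos.le]
  field_simp

lemma cos_div_sin_dispersion_stationaryPoint (hc : 0 < c) (hs : 0 < s) (hcs : c ^ 2 + s ^ 2 = 1)
    (hξ : |ξ| < c) :
    Real.cos (stationaryPoint c s ξ) / Real.sin (dispersion c (stationaryPoint c s ξ)) =
      √(c ^ 2 - ξ ^ 2) / (c * s) := by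
  have hroot := Real.sqrt_pos.2 (one_sub_sq_pos hs hcs hξ)
  rw [sin_dispersion_stationaryPoint hc hs hcs hξ, cos_stationaryPoint hc hs hcs hξ]
  field_simp [hroot.ne']

lemma stationaryPoint_mem_Icc (hc : 0 < c) (hs : 0 < s) (hcs : c ^ 2 + s ^ 2 = 1) (hα : α < c)
    (hξ : |ξ| ≤ α) :
    stationaryPoint c s ξ ∈ Set.Icc (-stationaryPoint c s α) (stationaryPoint c s α) := by
  have hα₀ : 0 ≤ α := (abs_nonneg ξ).trans hξ
  have hpos := one_sub_sq_pos hs hcs (ξ := α) (by rwa [abs_of_nonneg hα₀])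
  have hle : |s * ξ / (c * √(1 - ξ ^ 2))| ≤ s * α / (c * √(1 - α ^ 2)) := by
    rw [abs_div, abs_mul, abs_of_pos hs, abs_of_nonneg (a := c * _) (by positivity)]
    have hsq : ξ ^ 2 ≤ α ^ 2 := sq_le_sq.2 (by rwa [abs_of_nonneg hα₀])
    gcongr
  rw [stationaryPoint, stationaryPoint, ← Real.arcsin_neg]
  exact ⟨Real.monotone_arcsin (abs_le.1 hle).1, Real.monotone_arcsin (abs_le.1 hle).2⟩

lemma stationaryPoint_lt_pi_div_two (hc : 0 < c) (hs : 0 < s) (hcs : c ^ 2 + s ^ 2 = 1)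
    (hξ : |ξ| < c) : stationaryPoint c s ξ < Real.pi / 2 :=
  Real.arcsin_lt_pi_div_two.2 (abs_lt.1 (abs_stationarySine_lt_one hc hs hcs hξ)).2

end StationaryPoint

/-! ### Asymptotics of the Fourier coefficients -/

section FourierIntegral

lemma dispersion_add_pi (c t : ℝ) : dispersion c (t + Real.pi) = Real.pi - dispersion c t := by
  rw [dispersion, Real.cos_add_pi, mul_neg, Real.arccos_neg, dispersion]

variable {c : ℝ}

lemma chebyshevCoeffT_eq_cosCoeff (hc : |c| < 1) (n y : ℤ) :
    chebyshevCoeffT c n y = cosCoeff (fun t => Real.cos (n * dispersion c t)) y := by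
  simp only [chebyshevCoeffT, ← cos_dispersion hc, Polynomial.Chebyshev.T_real_cos]

lemma chebyshevCoeffM_eq_cosCoeff (hc : |c| < 1) (n y : ℤ) :
    chebyshevCoeffM c n y = cosCoeff (fun t =>
      Real.sin (n * dispersion c t) * (Real.cos t / Real.sin (dispersion c t))) y := by
  rw [chebyshevCoeffM]
  congr with t
  have hU := Polynomial.Chebyshev.U_real_cos (dispersion c t) (n - 1)
  push_cast at hU
  rw [sub_add_cancel] at hU
  rw [← cos_dispersion hc, ← hU]
  have := (sin_dispersion_pos hc t).ne'
  field_simp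

lemma continuous_dispersion (c : ℝ) : Continuous (dispersion c) :=
  Real.continuous_arccos.comp (by fun_prop)

lemma contDiff_cos_div_sin_dispersion (hc : |c| < 1) {k : WithTop ℕ∞} :
    ContDiff ℝ k fun t => Real.cos t / Real.sin (dispersion c t) :=
  Real.contDiff_cos.div (contDiff_sin_dispersion hc) fun t => (sin_dispersion_pos hc t).ne'

lemma chebyshevCoeffT_eq_integral (hc : |c| < 1) (n y : ℤ) :
    chebyshevCoeffT c n y = (1 + (-1) ^ (n + y)) / 2 *
      ((∫ t in -(Real.pi / 2)..(Real.pi / 2),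
        Real.cos (n * dispersion c t) * Real.cos (y * t)) / Real.pi) := by
  have hμ := continuous_dispersion c
  rw [chebyshevCoeffT_eq_cosCoeff hc]
  refine cosCoeff_eq_of_add_pi (by fun_prop) (fun t => ?_) y
  rw [dispersion_add_pi, mul_sub, Real.cos_int_mul_pi_sub]

lemma chebyshevCoeffM_eq_integral (hc : |c| < 1) (n y : ℤ) :
    chebyshevCoeffM c n y = (1 + (-1) ^ (n + y)) / 2 *
      ((∫ t in -(Real.pi / 2)..(Real.pi / 2), Real.sin (n * dispersion c t) *
        (Real.cos t / Real.sin (dispersion c t)) * Real.cos (y * t)) / Real.pi) := by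
  have hμ := continuous_dispersion c
  have hg := (contDiff_cos_div_sin_dispersion hc (k := 0)).continuous
  rw [chebyshevCoeffM_eq_cosCoeff hc]
  refine cosCoeff_eq_of_add_pi (by fun_prop) (fun t => ?_) y
  rw [dispersion_add_pi, mul_sub, Real.sin_int_mul_pi_sub, Real.cos_add_pi, Real.sin_pi_sub]
  ring

lemma chebyshevCoeffT_eq_zero_of_odd (hc : |c| < 1) {n y : ℤ} (h : Odd (n + y)) :
    chebyshevCoeffT c n y = 0 := by
  rw [chebyshevCoeffT_eq_integral hc, h.neg_one_zpow, add_neg_cancel, zero_div, zero_mul]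

lemma chebyshevCoeffM_eq_zero_of_odd (hc : |c| < 1) {n y : ℤ} (h : Odd (n + y)) :
    chebyshevCoeffM c n y = 0 := by
  rw [chebyshevCoeffM_eq_integral hc, h.neg_one_zpow, add_neg_cancel, zero_div, zero_mul]

end FourierIntegral

section EvenPhase

variable {μ g : ℝ → ℝ}

lemma continuous_osc (hμ : Continuous μ) (n : ℝ) : Continuous (osc n μ) :=
  Complex.continuous_exp.comp (by fun_prop)

lemma integral_osc_tiltedPhase_mul_of_even (hμ : Continuous μ) (hg : Continuous g)
    (hμe : ∀ s, μ (-s) = μ s) (hge : ∀ s, g (-s) = g s) (v : ℝ → ℝ) (n t b : ℝ) :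
    ∫ s in -b..b, osc n (tiltedPhase μ v t) s * g s =
      ∫ s in -b..b, osc n μ s * (g s * Real.cos (n * v t * s) : ℝ) := by
  have htilt : Continuous (tiltedPhase μ v t) := by unfold tiltedPhase; fun_prop
  have hosc := continuous_osc htilt n
  have hneg := intervalIntegral.integral_comp_neg (a := -b) (b := b)
    fun s => osc n (tiltedPhase μ v t) s * g s
  rw [neg_neg] at hneg
  have hsum (s : ℝ) : osc n μ s * (g s * Real.cos (n * v t * s) : ℝ) =
      (osc n (tiltedPhase μ v t) s * g s + osc n (tiltedPhase μ v t) (-s) * g (-s)) / 2 := by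
    have hsplit (r : ℝ) : osc n (tiltedPhase μ v t) r =
        osc n μ r * Complex.exp (-(n * v t * r : ℝ) * Complex.I) := by
      rw [osc, osc, ← Complex.exp_add, tiltedPhase]
      push_cast
      ring_nf
    rw [hsplit, hsplit, hge, osc, osc, hμe]
    push_cast
    rw [Complex.cos]
    ring_nf
  simp only [hsum]
  rw [intervalIntegral.integral_div, intervalIntegral.integral_add, hneg, add_self_div_two]
  all_goals exact Continuous.intervalIntegrable (by fun_prop) _ _

lemma re_integral_osc_mul (hμ : Continuous μ) (hg : Continuous g) (n a b : ℝ) :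
    (∫ s in a..b, osc n μ s * g s).re = ∫ s in a..b, Real.cos (n * μ s) * g s := by
  have hosc := continuous_osc hμ n
  rw [← Complex.reCLM_apply, ← Complex.reCLM.intervalIntegral_comp_comm
    (Continuous.intervalIntegrable (by fun_prop) _ _)]
  simp only [Complex.reCLM_apply, Complex.re_mul_ofReal, osc, Complex.exp_ofReal_mul_I_re]

lemma im_integral_osc_mul (hμ : Continuous μ) (hg : Continuous g) (n a b : ℝ) :
    (∫ s in a..b, osc n μ s * g s).im = ∫ s in a..b, Real.sin (n * μ s) * g s := by
  have hosc := continuous_osc hμ n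
  rw [← Complex.imCLM_apply, ← Complex.imCLM.intervalIntegral_comp_comm
    (Continuous.intervalIntegrable (by fun_prop) _ _)]
  simp only [Complex.imCLM_apply, Complex.im_mul_ofReal, osc, Complex.exp_ofReal_mul_I_im]

end EvenPhase

section StationaryAsymptotics

/-- The modulus of the stationary phase contribution to the `T`-coefficients, which decays like
`n ^ (-1 / 2)` at velocity `ξ`. -/
def stationaryAmplitude (c s n ξ : ℝ) : ℝ :=
  √(2 * s / (Real.pi * n * (1 - ξ ^ 2) * √(c ^ 2 - ξ ^ 2)))

/-- The argument of the stationary phase contribution at velocity `ξ`. -/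
def stationaryArgument (c s n ξ : ℝ) : ℝ :=
  n * (dispersion c (stationaryPoint c s ξ) - ξ * stationaryPoint c s ξ) + Real.pi / 4

variable {c s ξ α n : ℝ}

lemma stationaryAmplitude_sq (hs : 0 < s) (hcs : c ^ 2 + s ^ 2 = 1) (hξ : |ξ| < c) (hn : 0 ≤ n) :
    stationaryAmplitude c s n ξ ^ 2 =
      2 * s / (Real.pi * n * (1 - ξ ^ 2) * √(c ^ 2 - ξ ^ 2)) := by
  have hpos := one_sub_sq_pos hs hcs hξ
  exact Real.sq_sqrt (by positivity)

lemma stationaryAmplitude_pos (hs : 0 < s) (hcs : c ^ 2 + s ^ 2 = 1) (hξ : |ξ| < c) (hn : 0 < n) :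
    0 < stationaryAmplitude c s n ξ := by
  have hpos := one_sub_sq_pos hs hcs hξ
  have hsqrt := Real.sqrt_pos.2 (sub_pos.2 (sq_lt_sq.2 (hξ.trans_le (le_abs_self c))))
  exact Real.sqrt_pos.2 (by positivity)

lemma inv_sqrt_groupVelocityDeriv_mul_sqrt (hc : 0 < c) (hs : 0 < s) (hcs : c ^ 2 + s ^ 2 = 1)
    (hξ : |ξ| < c) (n : ℝ) :
    (√(groupVelocityDeriv c (stationaryPoint c s ξ)))⁻¹ * √(2 * Real.pi / n) =
      Real.pi * stationaryAmplitude c s n ξ := by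
  have hpos := one_sub_sq_pos hs hcs hξ
  rw [groupVelocityDeriv_stationaryPoint hc hs hcs hξ, stationaryAmplitude, ← Real.sqrt_inv,
    ← Real.sqrt_mul (by positivity)]
  nth_rw 2 [← Real.sqrt_sq Real.pi_pos.le]
  rw [← Real.sqrt_mul (sq_nonneg _)]
  congr 1
  field_simp

lemma div_sqrt_le_pi_mul_stationaryAmplitude (hs : 0 < s) (hcs : c ^ 2 + s ^ 2 = 1)
    (hξ : |ξ| < c) (hn : 0 < n) : s / √n ≤ Real.pi * stationaryAmplitude c s n ξ := by
  have hpos := one_sub_sq_pos hs hcs hξ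
  have hsub : 0 < c ^ 2 - ξ ^ 2 := sub_pos.2 (sq_lt_sq.2 (hξ.trans_le (le_abs_self c)))
  have hs_le : s ≤ 1 := by nlinarith
  have hsqrt_le : √(c ^ 2 - ξ ^ 2) ≤ 1 := Real.sqrt_le_one.2 (by nlinarith [sq_nonneg ξ])
  have hden : (1 - ξ ^ 2) * √(c ^ 2 - ξ ^ 2) ≤ 1 :=
    mul_le_one₀ (by linarith [sq_nonneg ξ]) (Real.sqrt_nonneg _) hsqrt_le
  refine (sq_le_sq₀ (by positivity) (by unfold stationaryAmplitude; positivity)).1 ?_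
  rw [div_pow, Real.sq_sqrt hn.le, mul_pow, stationaryAmplitude_sq hs hcs hξ hn.le]
  calc s ^ 2 / n ≤ 2 * Real.pi * s / n := by
        gcongr
        nlinarith [Real.pi_gt_three]
    _ ≤ 2 * Real.pi * s / n / ((1 - ξ ^ 2) * √(c ^ 2 - ξ ^ 2)) :=
        le_div_self (by positivity) (by positivity) hden
    _ = _ := by field_simp

lemma osc_mul_exp_stationaryPoint (hc : 0 < c) (hs : 0 < s) (hcs : c ^ 2 + s ^ 2 = 1)
    (hξ : |ξ| < c) (n : ℝ) :
    osc n (tiltedPhase (dispersion c) (groupVelocity c) (stationaryPoint c s ξ))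
        (stationaryPoint c s ξ) * Complex.exp ((Real.pi / 4 : ℝ) * Complex.I) =
      Complex.exp (stationaryArgument c s n ξ * Complex.I) := by
  rw [osc, tiltedPhase, groupVelocity_stationaryPoint hc hs hcs hξ, ← Complex.exp_add,
    stationaryArgument]
  push_cast
  ring_nf

lemma groupVelocity_pi_div_two (c : ℝ) : groupVelocity c (Real.pi / 2) = c := by
  simp [groupVelocity, dispersion]

lemma groupVelocity_neg_pi_div_two (c : ℝ) : groupVelocity c (-(Real.pi / 2)) = -c := by
  simp [groupVelocity, dispersion]

lemma exists_norm_integral_osc_dispersion_sub_le {g : ℝ → ℝ} (hc : 0 < c) (hs : 0 < s)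
    (hcs : c ^ 2 + s ^ 2 = 1) (hα : |α| < c) (hg : ContDiff ℝ 3 g) :
    ∃ C : ℝ, ∀ ξ, |ξ| ≤ α → ∀ n : ℝ, 1 ≤ n →
      let F := tiltedPhase (dispersion c) (groupVelocity c) (stationaryPoint c s ξ)
      ‖(∫ t in -(Real.pi / 2)..(Real.pi / 2), osc n F t * g t) -
          ((Real.pi * stationaryAmplitude c s n ξ * g (stationaryPoint c s ξ) : ℝ) *
              Complex.exp (stationaryArgument c s n ξ * Complex.I) +
            (osc n F (Real.pi / 2) * (g (Real.pi / 2) / (c - ξ) : ℝ) -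
              osc n F (-(Real.pi / 2)) * (g (-(Real.pi / 2)) / (-c - ξ) : ℝ)) /
              (Complex.I * n))‖ ≤ C / n * (Real.pi * stationaryAmplitude c s n ξ) := by
  have hc₁ := abs_lt_one_of_sq_add_sq hs hcs
  have hlt := stationaryPoint_lt_pi_div_two hc hs hcs hα
  have hk : 0 < 2 * c * (1 - c ^ 2) / Real.pi ^ 2 := by
    rw [← hcs, add_sub_cancel_left]
    positivity
  obtain ⟨C, hC⟩ := (isSmoothPhase_dispersion hc₁).exists_norm_integral_osc_sub_le hg hk
    (neg_lt_neg hlt) hlt fun t ht => groupVelocityDeriv_ge hc.le (abs_lt.1 hc₁).2 ht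
  refine ⟨C / s, fun ξ hξα n hn => ?_⟩
  have hξ : |ξ| < c := hξα.trans_lt ((le_abs_self α).trans_lt hα)
  have hn₀ : 0 < n := one_pos.trans_le hn
  have hbound := hC _ (stationaryPoint_mem_Icc hc hs hcs ((le_abs_self α).trans_lt hα) hξα) n hn
  have hC₀ : 0 ≤ C := by
    have := (norm_nonneg _).trans hbound
    rwa [le_div_iff₀ (by positivity), zero_mul] at this
  rw [div_eq_mul_inv (g _), mul_assoc (g _), inv_sqrt_groupVelocityDeriv_mul_sqrt hc hs hcs hξ,
    mul_left_comm, osc_mul_exp_stationaryPoint hc hs hcs hξ,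
    groupVelocity_stationaryPoint hc hs hcs hξ, groupVelocity_pi_div_two,
    groupVelocity_neg_pi_div_two, mul_comm (g (stationaryPoint c s ξ))] at hbound
  refine hbound.trans ?_
  calc C / (n * √n) = C / s / n * (s / √n) := by field_simp
    _ ≤ _ := by
      gcongr
      exact div_sqrt_le_pi_mul_stationaryAmplitude hs hcs hξ hn₀

lemma abs_div_sub_le_of_abs_sub_mul_le {p x y e : ℝ} (hp : 0 < p) (h : |x - p * y| ≤ p * e) :
    |x / p - y| ≤ e := by
  rwa [div_sub' hp.ne', abs_div, abs_of_pos hp, div_le_iff₀' hp]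

lemma im_osc_eq_zero {F : ℝ → ℝ} {x : ℝ} {k : ℤ} (h : n * F x = k * Real.pi) :
    (osc n F x).im = 0 := by
  rw [osc, Complex.exp_ofReal_mul_I_im, h, Real.sin_int_mul_pi]

lemma re_div_I_mul_eq_zero {z : ℂ} (hz : z.im = 0) (n : ℝ) : (z / (Complex.I * n)).re = 0 := by
  rw [← div_div, Complex.div_I, Complex.div_ofReal_re, Complex.neg_re, Complex.mul_I_re, neg_neg,
    hz, zero_div]

-- The integrand is real at `±π / 2` because `n + y` is even.
lemma re_boundary_eq_zero (hc : 0 < c) (hs : 0 < s) (hcs : c ^ 2 + s ^ 2 = 1) {n : ℕ} {y : ℤ}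
    (hn : 0 < n) (hξ : |(y : ℝ) / n| < c) (h : Even ((n : ℤ) + y)) (p q : ℝ) :
    let F := tiltedPhase (dispersion c) (groupVelocity c) (stationaryPoint c s (y / n))
    ((osc n F (Real.pi / 2) * p - osc n F (-(Real.pi / 2)) * q) /
      (Complex.I * (n : ℝ))).re = 0 := by
  obtain ⟨k, hk⟩ := h
  have hn' : (n : ℝ) ≠ 0 := Nat.cast_ne_zero.2 hn.ne'
  have hy : (y : ℝ) = k + k - n := eq_sub_of_add_eq' (mod_cast hk)
  refine re_div_I_mul_eq_zero ?_ n
  rw [Complex.sub_im, Complex.im_mul_ofReal, Complex.im_mul_ofReal,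
    im_osc_eq_zero (k := n - k), im_osc_eq_zero (k := k), zero_mul, zero_mul, sub_zero]
  all_goals
    simp only [tiltedPhase, groupVelocity_stationaryPoint hc hs hcs hξ, dispersion, Real.cos_neg,
      Real.cos_pi_div_two, mul_zero, Real.arccos_zero]
    push_cast
    rw [hy]
    field_simp
    ring

lemma exists_abs_chebyshevCoeffT_sub_le (hc : 0 < c) (hs : 0 < s) (hcs : c ^ 2 + s ^ 2 = 1)
    (hα : |α| < c) :
    ∃ C : ℝ, ∀ n : ℕ, 0 < n → ∀ y : ℤ, |(y : ℝ) / n| ≤ α → Even ((n : ℤ) + y) →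
      |chebyshevCoeffT c n y - stationaryAmplitude c s n (y / n) *
        Real.cos (stationaryArgument c s n (y / n))| ≤
          C / n * stationaryAmplitude c s n (y / n) := by
  have hc₁ := abs_lt_one_of_sq_add_sq hs hcs
  have hμ := continuous_dispersion c
  obtain ⟨C, hC⟩ :=
    exists_norm_integral_osc_dispersion_sub_le hc hs hcs hα (contDiff_const (c := 1))
  refine ⟨C, fun n hn y hy heven => ?_⟩
  have hξ : |(y : ℝ) / n| < c := hy.trans_lt ((le_abs_self α).trans_lt hα)
  have hbound := (Complex.abs_re_le_norm _).trans (hC _ hy n (mod_cast hn))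
  rw [Complex.sub_re, Complex.add_re, re_boundary_eq_zero hc hs hcs hn hξ heven, add_zero,
    integral_osc_tiltedPhase_mul_of_even hμ continuous_const (dispersion_neg c) (fun _ => rfl),
    re_integral_osc_mul hμ (by fun_prop), groupVelocity_stationaryPoint hc hs hcs hξ,
    mul_div_cancel₀ _ (Nat.cast_ne_zero.2 hn.ne'), Complex.re_ofReal_mul,
    Complex.exp_ofReal_mul_I_re] at hbound
  simp only [one_mul, mul_one] at hbound
  rw [chebyshevCoeffT_eq_integral hc₁, heven.neg_one_zpow, add_self_div_two, one_mul]
  refine abs_div_sub_le_of_abs_sub_mul_le Real.pi_pos (le_of_eq_of_le ?_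
    (hbound.trans_eq (mul_left_comm _ _ _)))
  simp only [mul_assoc, Int.cast_natCast]

lemma exists_abs_chebyshevCoeffM_sub_le (hc : 0 < c) (hs : 0 < s) (hcs : c ^ 2 + s ^ 2 = 1)
    (hα : |α| < c) :
    ∃ C : ℝ, ∀ n : ℕ, 0 < n → ∀ y : ℤ, |(y : ℝ) / n| ≤ α → Even ((n : ℤ) + y) →
      |chebyshevCoeffM c n y - stationaryAmplitude c s n (y / n) *
        (√(c ^ 2 - (y / n) ^ 2) / (c * s) * Real.sin (stationaryArgument c s n (y / n)))| ≤
          C / n * stationaryAmplitude c s n (y / n) := by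
  have hc₁ := abs_lt_one_of_sq_add_sq hs hcs
  have hμ := continuous_dispersion c
  have hg := contDiff_cos_div_sin_dispersion hc₁ (k := 3)
  have hgc := hg.continuous
  obtain ⟨C, hC⟩ := exists_norm_integral_osc_dispersion_sub_le hc hs hcs hα hg
  refine ⟨C, fun n hn y hy heven => ?_⟩
  have hξ : |(y : ℝ) / n| < c := hy.trans_lt ((le_abs_self α).trans_lt hα)
  have hbound := (Complex.abs_im_le_norm _).trans (hC _ hy n (mod_cast hn))
  simp only [Real.cos_neg, Real.cos_pi_div_two, zero_div, Complex.ofReal_zero, mul_zero, sub_zero,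
    add_zero] at hbound
  rw [Complex.sub_im,
    integral_osc_tiltedPhase_mul_of_even hμ hgc (dispersion_neg c)
      (fun _ => by rw [Real.cos_neg, dispersion_neg]),
    im_integral_osc_mul hμ (by fun_prop), groupVelocity_stationaryPoint hc hs hcs hξ,
    mul_div_cancel₀ _ (Nat.cast_ne_zero.2 hn.ne'), Complex.im_ofReal_mul,
    Complex.exp_ofReal_mul_I_im, cos_div_sin_dispersion_stationaryPoint hc hs hcs hξ] at hbound
  rw [chebyshevCoeffM_eq_integral hc₁, heven.neg_one_zpow, add_self_div_two, one_mul]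
  refine abs_div_sub_le_of_abs_sub_mul_le Real.pi_pos (le_of_eq_of_le ?_
    (hbound.trans_eq (mul_left_comm _ _ _)))
  simp only [mul_assoc, Int.cast_natCast]

end StationaryAsymptotics

/-! ### The transition probability -/

section TransitionProbability

lemma norm_ofReal_mul_add_ofReal_mul_sq (x y : ℝ) (z w : ℂ) :
    ‖(x : ℂ) * z + (y : ℂ) * w‖ ^ 2 =
      x ^ 2 * ‖z‖ ^ 2 + y ^ 2 * ‖w‖ ^ 2 + 2 * x * y * ((starRingEnd ℂ) z * w).re := by
  simp only [Complex.sq_norm, Complex.normSq_apply, Complex.add_re, Complex.add_im, Complex.mul_re,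
    Complex.mul_im, Complex.ofReal_re, Complex.ofReal_im, Complex.conj_re, Complex.conj_im]
  ring

lemma lamA_eq (a b : ℂ) (φ : ℂ × ℂ) :
    lamA a b φ = ‖φ.2‖ ^ 2 - ‖φ.1‖ ^ 2 +
      2 * (a * b * (starRingEnd ℂ) φ.1 * φ.2).re / ‖a‖ ^ 2 := by
  have hconj : (starRingEnd ℂ) a * (starRingEnd ℂ) b * φ.1 * (starRingEnd ℂ) φ.2 =
      (starRingEnd ℂ) (a * b * (starRingEnd ℂ) φ.1 * φ.2) := by
    simp only [map_mul, Complex.conj_conj]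
  rw [lamA, hconj, Complex.add_re, Complex.conj_re, ← two_mul]

/-- The coefficient of `ξ` in the cross term of the transition form. -/
def crossCoeff (a b : ℂ) (φ : ℂ × ℂ) : ℝ :=
  (2 * ‖b‖ ^ 2 * (‖φ.2‖ ^ 2 - ‖φ.1‖ ^ 2) - 4 * (a * b * (starRingEnd ℂ) φ.1 * φ.2).re) / ‖a‖

/-- The quadratic form expressing the transition probability at velocity `ξ = y / n` in terms of the
two Chebyshev coefficients `x` and `z` (of type `T` and `M`) at `(n, y)`. -/
def transitionForm (a b : ℂ) (φ : ℂ × ℂ) (ξ x z : ℝ) : ℝ :=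
  (1 + ξ ^ 2 / ‖a‖ ^ 2 + 2 * lamA a b φ * ξ) * x ^ 2 + ‖b‖ ^ 2 * z ^ 2 +
    crossCoeff a b φ * ξ * (x * z)

/-- The amplitude `A₀` of the oscillation `cos (n θ)`. -/
def cosAmplitude (a b : ℂ) (φ : ℂ × ℂ) (ξ : ℝ) : ℝ :=
  crossCoeff a b φ * ξ * (√(‖a‖ ^ 2 - ξ ^ 2) / (‖a‖ * ‖b‖)) / 2

/-- The amplitude `B₀` of the oscillation `sin (n θ)`. -/
def sinAmplitude (a b : ℂ) (φ : ℂ × ℂ) (ξ : ℝ) : ℝ :=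
  -(ξ ^ 2 / ‖a‖ ^ 2 + lamA a b φ * ξ)

lemma continuous_cosAmplitude (a b : ℂ) (φ : ℂ × ℂ) : Continuous (cosAmplitude a b φ) := by
  unfold cosAmplitude
  fun_prop

lemma continuous_sinAmplitude (a b : ℂ) (φ : ℂ × ℂ) : Continuous (sinAmplitude a b φ) := by
  unfold sinAmplitude
  fun_prop

variable {a b : ℂ} {φ : ℂ × ℂ} {α ξ : ℝ}

lemma qwP_eq_transitionForm (ha : a ≠ 0) (hab : ‖a‖ ^ 2 + ‖b‖ ^ 2 = 1) (hφ : nsq φ = 1) {n : ℕ}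
    (hn : 0 < n) (y : ℤ) :
    qwP a b φ n y = transitionForm a b φ (y / n) (chebyshevCoeffT ‖a‖ n y)
      (chebyshevCoeffM ‖a‖ n y) := by
  have hc : ‖a‖ ≠ 0 := norm_ne_zero_iff.2 ha
  have hc' : (‖a‖ : ℂ) ≠ 0 := Complex.ofReal_ne_zero.2 hc
  have hn' : (n : ℤ) ≠ 0 := Nat.cast_ne_zero.2 hn.ne'
  obtain ⟨u, hu, hau⟩ : ∃ u : ℂ, ‖u‖ = 1 ∧ a = ‖a‖ * u :=
    ⟨a / ‖a‖, by simp [hc], by field_simp⟩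
  have hnorm_right : ‖b * u * φ.2‖ ^ 2 = ‖b‖ ^ 2 * ‖φ.2‖ ^ 2 := by
    rw [norm_mul, norm_mul, hu, mul_one, mul_pow]
  have hnorm_left : ‖-((starRingEnd ℂ) (b * u) * φ.1)‖ ^ 2 = ‖b‖ ^ 2 * ‖φ.1‖ ^ 2 := by
    rw [norm_neg, norm_mul, RCLike.norm_conj, norm_mul, hu, mul_one, mul_pow]
  have hre_right : ((starRingEnd ℂ) φ.1 * (b * u * φ.2)).re =
      (a * b * (starRingEnd ℂ) φ.1 * φ.2).re / ‖a‖ := by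
    rw [eq_div_iff hc, ← Complex.re_mul_ofReal]
    congr 1
    linear_combination -(b * (starRingEnd ℂ) φ.1 * φ.2) * hau
  have hre_left : ((starRingEnd ℂ) (-((starRingEnd ℂ) (b * u) * φ.1)) * φ.2).re =
      -((a * b * (starRingEnd ℂ) φ.1 * φ.2).re / ‖a‖) := by
    rw [← hre_right, map_neg, map_mul, Complex.conj_conj, neg_mul, Complex.neg_re]
    congr 2
    ring
  rw [qwP, qwStep_iterate_qwDelta hau hu hab, chebyshevCoeff_sub_one_apply_sub_one hc hn',
    chebyshevCoeff_sub_one_apply_add_one hc hn', chebyshevCoeff_eq_add, nsq, norm_mul, norm_mul,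
    norm_zpow, hu, one_zpow, one_mul, one_mul, norm_ofReal_mul_add_ofReal_mul_sq,
    norm_ofReal_mul_add_ofReal_mul_sq, hnorm_right, hnorm_left, hre_right, hre_left, transitionForm,
    crossCoeff, lamA_eq, eq_sub_of_add_eq' hab, eq_sub_of_add_eq' hφ]
  push_cast
  field_simp
  ring

lemma qwP_eq_zero_of_odd (ha : a ≠ 0) (hb : b ≠ 0) (hab : ‖a‖ ^ 2 + ‖b‖ ^ 2 = 1)
    (hφ : nsq φ = 1) {n : ℕ} (hn : 0 < n) {y : ℤ} (h : Odd ((n : ℤ) + y)) : qwP a b φ n y = 0 := by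
  have hc := abs_lt_one_of_sq_add_sq (norm_pos_iff.2 hb) hab
  rw [qwP_eq_transitionForm ha hab hφ hn, chebyshevCoeffT_eq_zero_of_odd hc h,
    chebyshevCoeffM_eq_zero_of_odd hc h, transitionForm]
  ring

lemma mul_thetaF (a b : ℂ) (n ξ : ℝ) :
    n * thetaF a b ξ = 2 * stationaryArgument ‖a‖ ‖b‖ n ξ - Real.pi / 2 := by
  change n * (2 * dispersion ‖a‖ (stationaryPoint ‖a‖ ‖b‖ ξ) -
    2 * ξ * stationaryPoint ‖a‖ ‖b‖ ξ) = _
  rw [stationaryArgument]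
  ring

lemma transitionForm_stationary (ha : a ≠ 0) (hb : b ≠ 0) (hξ : |ξ| < ‖a‖) (n P : ℝ) :
    transitionForm a b φ ξ (P * Real.cos (stationaryArgument ‖a‖ ‖b‖ n ξ))
        (P * (√(‖a‖ ^ 2 - ξ ^ 2) / (‖a‖ * ‖b‖) * Real.sin (stationaryArgument ‖a‖ ‖b‖ n ξ))) =
      P ^ 2 * (1 + lamA a b φ * ξ + cosAmplitude a b φ ξ * Real.cos (n * thetaF a b ξ) +
        sinAmplitude a b φ ξ * Real.sin (n * thetaF a b ξ)) := by
  have hsub : 0 ≤ ‖a‖ ^ 2 - ξ ^ 2 := (sub_pos.2 (sq_lt_sq.2 (hξ.trans_le (le_abs_self _)))).le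
  have hratio : ‖b‖ ^ 2 * (√(‖a‖ ^ 2 - ξ ^ 2) / (‖a‖ * ‖b‖)) ^ 2 = 1 - ξ ^ 2 / ‖a‖ ^ 2 := by
    rw [div_pow, Real.sq_sqrt hsub]
    field_simp
  rw [mul_thetaF, Real.cos_sub_pi_div_two, Real.sin_sub_pi_div_two, Real.sin_two_mul,
    Real.cos_two_mul, transitionForm, cosAmplitude, sinAmplitude]
  set β := stationaryArgument ‖a‖ ‖b‖ n ξ
  linear_combination P ^ 2 * Real.sin β ^ 2 * hratio +
    P ^ 2 * (1 - ξ ^ 2 / ‖a‖ ^ 2) * Real.sin_sq_add_cos_sq β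

lemma abs_mul_sub_mul_le {x x' y y' e m : ℝ} (hx : |x - x'| ≤ e) (hy : |y - y'| ≤ e)
    (hx' : |x'| ≤ m) (hy' : |y'| ≤ m) : |x * y - x' * y'| ≤ e * (2 * m + e) := by
  have he : 0 ≤ e := (abs_nonneg _).trans hx
  have hm : 0 ≤ m := (abs_nonneg _).trans hx'
  calc |x * y - x' * y'| = |(x - x') * y' + x' * (y - y') + (x - x') * (y - y')| := by ring_nf
    _ ≤ |x - x'| * |y'| + |x'| * |y - y'| + |x - x'| * |y - y'| := by
        simp only [← abs_mul]
        exact abs_add_three _ _ _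
    _ ≤ e * m + m * e + e * e := by gcongr
    _ = e * (2 * m + e) := by ring

lemma abs_transitionForm_sub_le (hab : ‖a‖ ^ 2 + ‖b‖ ^ 2 = 1) (hξ : |ξ| ≤ ‖a‖)
    {x x' z z' e m : ℝ} (hx : |x - x'| ≤ e) (hz : |z - z'| ≤ e) (hx' : |x'| ≤ m) (hz' : |z'| ≤ m) :
    |transitionForm a b φ ξ x z - transitionForm a b φ ξ x' z'| ≤
      (3 + 2 * |lamA a b φ| + |crossCoeff a b φ|) * (e * (2 * m + e)) := by
  have ha_le : ‖a‖ ≤ 1 := by nlinarith [norm_nonneg a]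
  have hb_le : ‖b‖ ^ 2 ≤ 1 := by nlinarith
  have hξ_le : |ξ| ≤ 1 := hξ.trans ha_le
  have hratio : ξ ^ 2 / ‖a‖ ^ 2 ≤ 1 :=
    div_le_one_of_le₀ (sq_le_sq.2 (hξ.trans (le_abs_self _))) (sq_nonneg _)
  have hcoeff : |1 + ξ ^ 2 / ‖a‖ ^ 2 + 2 * lamA a b φ * ξ| ≤ 2 + 2 * |lamA a b φ| := by
    refine (abs_add_le _ _).trans (add_le_add ?_ ?_)
    · rw [abs_of_nonneg (by positivity)]
      linarith
    · rw [abs_mul, abs_mul, abs_two]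
      exact mul_le_of_le_one_right (by positivity) hξ_le
  have hcross : |crossCoeff a b φ * ξ| ≤ |crossCoeff a b φ| := by
    rw [abs_mul]
    exact mul_le_of_le_one_right (abs_nonneg _) hξ_le
  have hxx := abs_mul_sub_mul_le hx hx hx' hx'
  have hzz := abs_mul_sub_mul_le hz hz hz' hz'
  have hxz := abs_mul_sub_mul_le hx hz hx' hz'
  calc _ = |(1 + ξ ^ 2 / ‖a‖ ^ 2 + 2 * lamA a b φ * ξ) * (x * x - x' * x') +
        ‖b‖ ^ 2 * (z * z - z' * z') + crossCoeff a b φ * ξ * (x * z - x' * z')| := by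
        unfold transitionForm
        ring_nf
    _ ≤ (2 + 2 * |lamA a b φ|) * (e * (2 * m + e)) + 1 * (e * (2 * m + e)) +
        |crossCoeff a b φ| * (e * (2 * m + e)) := by
        refine (abs_add_three _ _ _).trans ?_
        rw [abs_mul, abs_mul (‖b‖ ^ 2), abs_mul (crossCoeff a b φ * ξ),
          abs_of_nonneg (sq_nonneg ‖b‖)]
        gcongr
    _ = _ := by ring

lemma abs_sqrt_sq_sub_sq_div_mul_sin_le (ha : a ≠ 0) (b : ℂ) (ξ β : ℝ) :
    |√(‖a‖ ^ 2 - ξ ^ 2) / (‖a‖ * ‖b‖) * Real.sin β| ≤ ‖b‖⁻¹ := by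
  have hsqrt : √(‖a‖ ^ 2 - ξ ^ 2) ≤ ‖a‖ :=
    Real.sqrt_le_iff.2 ⟨norm_nonneg a, sub_le_self _ (sq_nonneg ξ)⟩
  rw [abs_mul, abs_of_nonneg (by positivity)]
  calc _ ≤ ‖a‖ / (‖a‖ * ‖b‖) * 1 := by
        gcongr
        exact Real.abs_sin_le_one β
    _ = _ := by rw [mul_one, div_mul_cancel_left₀ (norm_ne_zero_iff.2 ha)]

lemma exists_abs_qwP_sub_le (ha : a ≠ 0) (hb : b ≠ 0) (hab : ‖a‖ ^ 2 + ‖b‖ ^ 2 = 1)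
    (hφ : nsq φ = 1) (hα : |α| < ‖a‖) :
    ∃ C : ℝ, ∀ n : ℕ, 0 < n → ∀ y : ℤ, |(y : ℝ) / n| ≤ α → Even ((n : ℤ) + y) →
      |qwP a b φ n y - stationaryAmplitude ‖a‖ ‖b‖ n (y / n) ^ 2 * (1 + lamA a b φ * (y / n) +
          cosAmplitude a b φ (y / n) * Real.cos (n * thetaF a b (y / n)) +
          sinAmplitude a b φ (y / n) * Real.sin (n * thetaF a b (y / n)))| ≤
        stationaryAmplitude ‖a‖ ‖b‖ n (y / n) ^ 2 * (C / n) := by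
  have hc := norm_pos_iff.2 ha
  have hs := norm_pos_iff.2 hb
  obtain ⟨C₁, hC₁⟩ := exists_abs_chebyshevCoeffT_sub_le hc hs hab hα
  obtain ⟨C₂, hC₂⟩ := exists_abs_chebyshevCoeffM_sub_le hc hs hab hα
  obtain ⟨K, hK, hK₁, hK₂⟩ : ∃ K, 0 ≤ K ∧ C₁ ≤ K ∧ C₂ ≤ K :=
    ⟨max 0 (max C₁ C₂), by simp only [le_max_iff, le_refl, true_or, or_true, and_self]⟩
  set D := 3 + 2 * |lamA a b φ| + |crossCoeff a b φ|
  refine ⟨D * (K * (2 * ‖b‖⁻¹ + K)), fun n hn y hy heven => ?_⟩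
  have hξ : |(y : ℝ) / n| < ‖a‖ := hy.trans_lt ((le_abs_self α).trans_lt hα)
  have hP : 0 ≤ stationaryAmplitude ‖a‖ ‖b‖ n (y / n) := Real.sqrt_nonneg _
  rw [qwP_eq_transitionForm ha hab hφ hn, ← transitionForm_stationary ha hb hξ]
  set P := stationaryAmplitude ‖a‖ ‖b‖ n (y / n)
  have hKn : K / n ≤ K := div_le_self hK (mod_cast hn)
  have hs_inv : 1 ≤ ‖b‖⁻¹ := (one_le_inv₀ hs).2 (by nlinarith)
  have hcos : |P * Real.cos (stationaryArgument ‖a‖ ‖b‖ n (y / n))| ≤ P * ‖b‖⁻¹ := by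
    rw [abs_mul, abs_of_nonneg hP]
    exact mul_le_mul_of_nonneg_left ((Real.abs_cos_le_one _).trans hs_inv) hP
  have hsin : |P * (√(‖a‖ ^ 2 - (y / n) ^ 2) / (‖a‖ * ‖b‖) *
      Real.sin (stationaryArgument ‖a‖ ‖b‖ n (y / n)))| ≤ P * ‖b‖⁻¹ := by
    rw [abs_mul, abs_of_nonneg hP]
    exact mul_le_mul_of_nonneg_left (abs_sqrt_sq_sub_sq_div_mul_sin_le ha b _ _) hP
  calc _ ≤ D * (K / n * P * (2 * (P * ‖b‖⁻¹) + K / n * P)) :=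
        abs_transitionForm_sub_le hab hξ.le ((hC₁ n hn y hy heven).trans (by gcongr))
          ((hC₂ n hn y hy heven).trans (by gcongr)) hcos hsin
    _ ≤ D * (K / n * P * (2 * (P * ‖b‖⁻¹) + K * P)) := by gcongr
    _ = _ := by ring

lemma exists_eq_mul_add_of_abs_sub_le {P x m e : ℝ} (hP : 0 < P) (h : |x - P * m| ≤ P * e) :
    ∃ E, |E| ≤ e ∧ x = P * (m + E) :=
  ⟨x / P - m, abs_div_sub_le_of_abs_sub_mul_le hP h, by field_simp; ring⟩

end TransitionProbability

/-- Theorem `inner` of Sunada–Tate: asymptotics of `p_n(φ;y)` in the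
allowed region `|y/n| ≤ α < |a|`, with an explicit oscillating term and a uniform `O(1/n)`
error. -/
theorem stmt0 (a b : ℂ) (hab1 : ‖a‖ ^ 2 + ‖b‖ ^ 2 = 1) (hab : a * b ≠ 0)
    (φ : ℂ × ℂ) (hφ : nsq φ = 1) (α : ℝ) (hα0 : 0 < α) (hαa : α < ‖a‖) :
    ∃ A₀ B₀ : ℝ → ℝ,
      ContinuousOn A₀ (Set.Ioo (-‖a‖) ‖a‖) ∧ ContinuousOn B₀ (Set.Ioo (-‖a‖) ‖a‖) ∧
      ∃ C : ℝ, 0 < C ∧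
        ∀ n : ℕ, 0 < n → ∀ y : ℤ, ∀ ξ : ℝ, ξ = (y : ℝ) / (n : ℝ) → |ξ| ≤ α →
          ∃ E : ℝ, |E| ≤ C / (n : ℝ) ∧
            qwP a b φ n y =
              (1 + (-1 : ℝ) ^ ((n : ℤ) + y)) * ‖b‖ /
                  (Real.pi * (n : ℝ) * (1 - ξ ^ 2) * Real.sqrt (‖a‖ ^ 2 - ξ ^ 2)) *
                (1 + lamA a b φ * ξ + A₀ ξ * Real.cos ((n : ℝ) * thetaF a b ξ)
                  + B₀ ξ * Real.sin ((n : ℝ) * thetaF a b ξ) + E) := by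
  have ha : a ≠ 0 := left_ne_zero_of_mul hab
  have hb : b ≠ 0 := right_ne_zero_of_mul hab
  have hs := norm_pos_iff.2 hb
  refine ⟨cosAmplitude a b φ, sinAmplitude a b φ, (continuous_cosAmplitude a b φ).continuousOn,
    (continuous_sinAmplitude a b φ).continuousOn, ?_⟩
  obtain ⟨C, hC⟩ := exists_abs_qwP_sub_le ha hb hab1 hφ ((abs_of_pos hα0).trans_lt hαa)
  refine ⟨max C 1, lt_max_of_lt_right one_pos, ?_⟩
  rintro n hn y _ rfl hy
  have hξ := hy.trans_lt hαa
  obtain heven | hodd := Int.even_or_odd ((n : ℤ) + y)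
  · obtain ⟨E, hE, hqwP⟩ := exists_eq_mul_add_of_abs_sub_le
      (pow_pos (stationaryAmplitude_pos hs hab1 hξ (Nat.cast_pos.2 hn)) 2) (hC n hn y hy heven)
    refine ⟨E, hE.trans (by gcongr; exact le_max_left C 1), ?_⟩
    rw [hqwP, stationaryAmplitude_sq hs hab1 hξ n.cast_nonneg, heven.neg_one_zpow,
      one_add_one_eq_two]
  · refine ⟨0, by rw [abs_zero]; positivity, ?_⟩
    rw [qwP_eq_zero_of_odd ha hb hab1 hφ hn hodd, hodd.neg_one_zpow, add_neg_cancel, zero_mul,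
      zero_div, zero_mul]
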